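/- Let Γ be a lattice in G = PSL(2,ℂ). Then for every x ∈ Γ\G, the closure of the orbit xH is either equal to xH (i.e. xH is closed) or equal to all of Γ\G. -/

import Mathlib

open scoped MatrixGroups
open Matrix Filter

noncomputable section

/-- `SL(2,ℂ)`. -/
abbrev SL2C := Matrix.SpecialLinearGroup (Fin 2) ℂ

instance : TopologicalSpace SL2C := instTopologicalSpaceSubtype

/-- `G = PSL(2,ℂ) = SL(2,ℂ)/{±I}`, with the quotient topology. -/
abbrev PSL2C := Matrix.ProjectiveSpecialLinearGroup (Fin 2) ℂ

/-- The projection `π : SL(2,ℂ) → PSL(2,ℂ)`. -/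
def pr : SL2C →* PSL2C := QuotientGroup.mk' _

/-- The upper triangular unipotent matrix `[[1, t],[0, 1]]` as an element of `SL(2,ℂ)`. -/
def uMat (t : ℂ) : SL2C := ⟨!![1, t; 0, 1], by simp [Matrix.det_fin_two_of]⟩

/-- `u_t = π [[1, t],[0, 1]]` for `t ∈ ℝ`. -/
def uu (t : ℝ) : PSL2C := pr (uMat t)

/-- `v_s = π [[1, is],[0, 1]]` for `s ∈ ℝ`. -/
def vv (s : ℝ) : PSL2C := pr (uMat (s * Complex.I))

/-- The subgroup `U = {u_t : t ∈ ℝ}` as a subset of `PSL(2,ℂ)`. -/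
def Uset : Set PSL2C := Set.range uu

/-- The subgroup `V = {v_s : s ∈ ℝ}` as a subset of `PSL(2,ℂ)`. -/
def Vset : Set PSL2C := Set.range vv

/-- The subgroup `N = {π [[1, z],[0,1]] : z ∈ ℂ}` as a subset of `PSL(2,ℂ)`. -/
def Nset : Set PSL2C := {x | ∃ z : ℂ, x = pr (uMat z)}

/-- `H = π (SL(2,ℝ))`, the image in `PSL(2,ℂ)` of the real matrices. -/
def Hset : Set PSL2C :=
  {x | ∃ g : Matrix.SpecialLinearGroup (Fin 2) ℝ,
    x = pr (Matrix.SpecialLinearGroup.map (algebraMap ℝ ℂ) g)}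

/-- The upper triangular matrix `[[a, z],[0, a⁻¹]]` as an element of `SL(2,ℂ)`,
for a nonzero real `a`. -/
def tri (a : ℝ) (ha : a ≠ 0) (z : ℂ) : SL2C :=
  ⟨!![(a : ℂ), z; 0, (a : ℂ)⁻¹], by
    have h : (a : ℂ) ≠ 0 := by exact_mod_cast ha
    simp [Matrix.det_fin_two_of, mul_inv_cancel₀ h]⟩

/-- `AN = {π [[a, z],[0, a⁻¹]] : a > 0 real, z ∈ ℂ}`. -/
def ANset : Set PSL2C := {x | ∃ (a : ℝ) (ha : 0 < a) (z : ℂ), x = pr (tri a ha.ne' z)}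

/-- `AV = {π [[a, ib],[0, a⁻¹]] : a > 0 real, b ∈ ℝ}`. -/
def AVset : Set PSL2C :=
  {x | ∃ (a : ℝ) (ha : 0 < a) (b : ℝ), x = pr (tri a ha.ne' (b * Complex.I))}

/-- `A = {π diag(a, a⁻¹) : a > 0 real}`. -/
def Aset : Set PSL2C := {x | ∃ (a : ℝ) (ha : 0 < a), x = pr (tri a ha.ne' 0)}

variable (Γ : Subgroup PSL2C)

/-- The space `Γ\\G` of right cosets `Γg`, with the quotient topology. -/
abbrev XΓ := Quotient (QuotientGroup.rightRel Γ)

/-- The natural projection `G → Γ\\G`. -/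
def mkX (g : PSL2C) : XΓ Γ := Quotient.mk'' g

/-- The right translation action of `G` on `Γ\\G`: `(Γg₀)·g = Γ(g₀g)`. -/
def act (x : XΓ Γ) (g : PSL2C) : XΓ Γ :=
  Quotient.map' (fun h => h * g)
    (fun a b hab => by
      rw [QuotientGroup.rightRel_apply] at hab ⊢
      simpa [_root_.mul_inv_rev, mul_assoc] using hab) x

/-- The orbit `xS = {x·s : s ∈ S}` of a point `x ∈ Γ\\G` under a subset `S ⊆ G`. -/
def orb (x : XΓ Γ) (S : Set PSL2C) : Set (XΓ Γ) := (fun s => act Γ x s) '' S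

/-- `Γ` is a lattice in `G`: there is a nonzero finite Borel measure on `Γ\\G`
invariant under the right translation action of `G`. -/
def IsLattice : Prop :=
  letI : MeasurableSpace (XΓ Γ) := borel _
  ∃ μ : MeasureTheory.Measure (XΓ Γ), μ ≠ 0 ∧ MeasureTheory.IsFiniteMeasure μ ∧
    ∀ g : PSL2C, MeasureTheory.Measure.map (fun x => act Γ x g) μ = μ

open MeasureTheory MulAction MulOpposite Topology
open scoped RightActions Pointwise

attribute [local simp] Matrix.mul_apply Fin.sum_univ_two Matrix.adjugate_fin_two
attribute [local instance] Matrix.linftyOpNormedAddCommGroup Matrix.linftyOpNormedSpace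
  Matrix.linftyOpNormedRing Matrix.linftyOpNormedAlgebra

/-! Write `U`, `V` for the unipotent matrices with real, respectively imaginary, upper right entry
and `A` for the real diagonal matrices. Suppose that `xH` is not closed. Then its closure `F`
contains a closed `H`-invariant set whose points are limits of `F` transversally to the `H`-orbits,
and one must show that `F` is everything.

No mass escapes along `U`-orbits: short elements of a stabiliser commute, and conjugation by `U`
moves a matrix along a quadratic polynomial. Hence there are closed `U`-invariant sets `Y ⊆ F` that
are minimal among those meeting a suitable compact set. Two nearby `U`-orbits diverge at polynomial
speed, and the first directions in which they separate lie in the normaliser `AV` of `U`. Transverse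
limits at a point of `Y` thereby produce `V`-translates of `Y` inside `F`. Applied to `Y` itself,
the same argument gives elements of `AV` arbitrarily close to `1` that preserve `Y`; these fill out
an interval of `V`-translates contained in `F`. Expanding by `A`, the set `F` contains a full orbit
of the horospherical group `UV`, and in the presence of a finite invariant measure Mautner's
phenomenon forces the `A`-translates of such an orbit to be dense. When the minimal set contains a
`U`-periodic point `z`, the divergence of nearby `U`-orbits from the orbit of `z` can be observed at
arbitrary times and produces the interval directly. -/

/-! ### The group `SL(2,ℂ)` -/

theorem isClosedEmbedding_entries : IsClosedEmbedding fun (g : SL2C) i j => g i j :=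
  SpecialLinearGroup.isClosedEmbedding_val

instance : IsTopologicalGroup SL2C := SpecialLinearGroup.topologicalGroup

instance : T2Space SL2C := isClosedEmbedding_entries.isEmbedding.t2Space

instance : SecondCountableTopology SL2C :=
  isClosedEmbedding_entries.isEmbedding.isInducing.secondCountableTopology

instance : LocallyCompactSpace SL2C :=
  isClosedEmbedding_entries.locallyCompactSpace

instance : MeasurableSpace SL2C := borel _

instance : BorelSpace SL2C := ⟨rfl⟩

theorem SL2C_ext {g h : SL2C} (h₀₀ : g 0 0 = h 0 0) (h₀₁ : g 0 1 = h 0 1)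
    (h₁₀ : g 1 0 = h 1 0) (h₁₁ : g 1 1 = h 1 1) : g = h := by
  ext i j
  fin_cases i <;> fin_cases j <;> assumption

theorem SL2C_det (g : SL2C) : g 0 0 * g 1 1 - g 0 1 * g 1 0 = 1 := by
  simpa only [det_fin_two] using g.2

theorem continuous_entry (i j : Fin 2) : Continuous fun g : SL2C => g i j :=
  continuous_subtype_val.matrix_elem i j

theorem tendsto_SL2C {ι : Type*} {l : Filter ι} {f : ι → SL2C} {g : SL2C} :
    Tendsto f l (𝓝 g) ↔ ∀ i j, Tendsto (fun n => f n i j) l (𝓝 (g i j)) := by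
  rw [isClosedEmbedding_entries.isInducing.tendsto_nhds_iff]
  exact tendsto_pi_nhds.trans (forall_congr' fun i => tendsto_pi_nhds)

theorem continuous_SL2C {Z : Type*} [TopologicalSpace Z] {f : Z → SL2C}
    (h : ∀ i j, Continuous fun z => f z i j) : Continuous f :=
  continuous_iff_continuousAt.2 fun _ => tendsto_SL2C.2 fun i j => (h i j).continuousAt

/-- The lower triangular unipotent matrix `[[1, 0],[t, 1]]` as an element of `SL(2,ℂ)`. -/
def lMat (t : ℂ) : SL2C := ⟨!![1, 0; t, 1], by simp [det_fin_two_of]⟩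

/-- The diagonal matrix `diag(δ, δ⁻¹)` as an element of `SL(2,ℂ)`, for a nonzero real `δ`. -/
def dMat (δ : ℝ) (hδ : δ ≠ 0) : SL2C := tri δ hδ 0

@[simp] theorem coe_uMat (z : ℂ) : (uMat z : Matrix (Fin 2) (Fin 2) ℂ) = !![1, z; 0, 1] := rfl

@[simp] theorem coe_lMat (z : ℂ) : (lMat z : Matrix (Fin 2) (Fin 2) ℂ) = !![1, 0; z, 1] := rfl

@[simp] theorem coe_tri (a : ℝ) (ha : a ≠ 0) (z : ℂ) :
    (tri a ha z : Matrix (Fin 2) (Fin 2) ℂ) = !![(a : ℂ), z; 0, (a : ℂ)⁻¹] := rfl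

@[simp] theorem coe_dMat (δ : ℝ) (hδ : δ ≠ 0) :
    (dMat δ hδ : Matrix (Fin 2) (Fin 2) ℂ) = !![(δ : ℂ), 0; 0, (δ : ℂ)⁻¹] := rfl

theorem uMat_zero : uMat 0 = 1 := by
  apply SL2C_ext <;> simp

theorem uMat_add (z w : ℂ) : uMat (z + w) = uMat z * uMat w := by
  apply SL2C_ext <;> simp [add_comm]

theorem uMat_neg (z : ℂ) : uMat (-z) = (uMat z)⁻¹ := by
  apply SL2C_ext <;> simp

theorem lMat_zero : lMat 0 = 1 := by
  apply SL2C_ext <;> simp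

theorem continuous_uMat : Continuous uMat :=
  continuous_SL2C fun i j => by
    simp only [coe_uMat]
    exact Continuous.matrix_elem (by fun_prop) i j

theorem continuous_lMat : Continuous lMat :=
  continuous_SL2C fun i j => by
    simp only [coe_lMat]
    exact Continuous.matrix_elem (by fun_prop) i j

theorem dMat_inv (δ : ℝ) (hδ : δ ≠ 0) : (dMat δ hδ)⁻¹ = dMat δ⁻¹ (inv_ne_zero hδ) := by
  apply SL2C_ext <;> simp

theorem dMat_pow (δ : ℝ) (hδ : δ ≠ 0) (n : ℕ) :
    dMat δ hδ ^ n = dMat (δ ^ n) (pow_ne_zero n hδ) := by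
  induction n with
  | zero => apply SL2C_ext <;> simp
  | succ n ih => rw [pow_succ, ih]; apply SL2C_ext <;> simp [pow_succ, mul_comm]

theorem dMat_mul_uMat (δ : ℝ) (hδ : δ ≠ 0) (z : ℂ) :
    dMat δ hδ * uMat z = uMat (δ ^ 2 * z) * dMat δ hδ := by
  have : (δ : ℂ) ≠ 0 := by exact_mod_cast hδ
  apply SL2C_ext <;> simp
  field_simp

theorem lMat_mul_dMat (δ : ℝ) (hδ : δ ≠ 0) (z : ℂ) :
    lMat z * dMat δ hδ = dMat δ hδ * lMat (δ ^ 2 * z) := by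
  have : (δ : ℂ) ≠ 0 := by exact_mod_cast hδ
  apply SL2C_ext <;> simp
  field_simp

theorem SL2C_ne_neg_one : ∀ᶠ g in 𝓝 (1 : SL2C), g ≠ -1 := by
  refine isOpen_ne.mem_nhds fun h => ?_
  have h₀₀ : (1 : ℂ) = -1 := by simpa using congrArg (fun g : SL2C => g 0 0) h
  norm_num at h₀₀

theorem eq_uMat_mul_lMat_mul_uMat {g : SL2C} (hg : g 1 0 ≠ 0) :
    g = uMat ((g 0 0 - 1) / g 1 0) * lMat (g 1 0) * uMat ((g 1 1 - 1) / g 1 0) := by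
  have hdet := SL2C_det g
  apply SL2C_ext <;> simp <;> field_simp
  · ring
  · linear_combination (-1) * hdet
  · ring

theorem subgroup_eq_top_of_uMat_mem_of_lMat_mem {S : Subgroup SL2C} (hu : ∀ z, uMat z ∈ S)
    (hl : ∀ z, lMat z ∈ S) : S = ⊤ := by
  have key (g : SL2C) (hg : g 1 0 ≠ 0) : g ∈ S := by
    rw [eq_uMat_mul_lMat_mul_uMat hg]
    exact S.mul_mem (S.mul_mem (hu _) (hl _)) (hu _)
  refine (Subgroup.eq_top_iff' S).2 fun g => ?_
  by_cases hg : g 1 0 = 0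
  · rw [← S.mul_mem_cancel_right (hl 1)]
    refine key _ ?_
    have hdet := SL2C_det g
    aesop
  · exact key g hg

/-- Unipotent matrices are commutators, so `SL(2,ℂ)` is perfect. -/
theorem SL2C_monoidHom_eq_one {M : Type*} [CommMonoid M] (φ : SL2C →* M) : φ = 1 := by
  have comm_ker {g k l : SL2C} (h : g = k * l * k⁻¹ * l⁻¹) : g ∈ φ.ker := by
    rw [MonoidHom.mem_ker, h, map_mul, map_mul, map_mul, mul_right_comm (φ k), ← map_mul φ k,
      mul_inv_cancel, map_one, one_mul, ← map_mul, mul_inv_cancel, map_one]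
  have ker_eq_top : φ.ker = ⊤ := subgroup_eq_top_of_uMat_mem_of_lMat_mem
    (fun z => comm_ker (k := dMat 2 two_ne_zero) (l := uMat (z / 3)) (by
      apply SL2C_ext <;> simp; ring))
    (fun z => comm_ker (k := dMat 2⁻¹ (by norm_num)) (l := lMat (z / 3)) (by
      apply SL2C_ext <;> simp; ring))
  exact MonoidHom.ker_eq_top_iff.1 ker_eq_top

theorem modularCharacter_SL2C (g : SL2C) : Measure.modularCharacter g = 1 :=
  DFunLike.congr_fun (SL2C_monoidHom_eq_one Measure.modularCharacter) g

instance : (Measure.haar : Measure SL2C).IsMulRightInvariant where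
  map_mul_right_eq_self g := by
    have h : Measure.modularCharacterFun g = 1 := modularCharacter_SL2C g
    rw [Measure.map_right_mul_eq_modularCharacterFun_smul, h, one_smul]

/-! ### Invariant measures -/

section InvariantMeasure

variable {G X : Type*} [Group G] [MulAction G X] [MeasurableSpace X] {μ : Measure X}
  [SMulInvariantMeasure G X μ] {E : Set X}

theorem measure_mul_mul_smul_sdiff {a b : G} (ha : a ∈ aestabilizer G μ E)
    (hb : b ∈ aestabilizer G μ E) (g : G) :
    μ ((a * g * b) • E \ E) = μ (g • E \ E) := by
  have hb' : (a * g * b) • E =ᵐ[μ] (a * g) • E := by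
    rw [mul_smul (a * g)]
    exact (smul_set_ae_eq (a * g)).2 hb
  calc μ ((a * g * b) • E \ E) = μ (a • (g • E \ E)) := by
        rw [Set.smul_set_sdiff, ← mul_smul]
        exact measure_congr (hb'.diff (mem_aestabilizer.1 ha).symm)
    _ = μ (g • E \ E) := measure_smul μ a _

variable [TopologicalSpace X]

variable (G) in
theorem isOpenPosMeasure_of_isMinimal [SecondCountableTopology X] [ContinuousConstSMul G X]
    [IsMinimal G X] [NeZero μ] : μ.IsOpenPosMeasure where
  open_pos U hU hne hμU := by
    refine NeZero.ne μ (Measure.measure_univ_eq_zero.1 ?_)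
    refine measure_null_of_locally_null _ fun x _ => ?_
    obtain ⟨g, hg⟩ := hU.exists_smul_mem G x hne
    refine ⟨(g • ·) ⁻¹' U, ?_, by rw [measure_preimage_smul, hμU]⟩
    exact mem_nhdsWithin_of_mem_nhds ((hU.preimage (continuous_const_smul g)).mem_nhds hg)

variable [BorelSpace X] [IsFiniteMeasure μ]

theorem mem_aestabilizer_iff_measure_sdiff_eq_zero [ContinuousConstSMul G X] (hE : IsOpen E)
    {g : G} :
    g ∈ aestabilizer G μ E ↔ μ (g • E \ E) = 0 := by
  refine ⟨fun h => ae_le_set.1 (mem_aestabilizer.1 h).le, fun h => ?_⟩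
  exact ae_eq_of_ae_subset_of_measure_ge (ae_le_set.2 h) (measure_smul μ g E).ge
    (hE.smul g).measurableSet.nullMeasurableSet (measure_ne_top μ E)

variable [TopologicalSpace G] [ContinuousSMul G X]

theorem tendsto_measure_smul_sdiff (hE : IsOpen E) {k : ℕ → G} (hk : Tendsto k atTop (𝓝 1)) :
    Tendsto (fun n => μ (k n • E \ E)) atTop (𝓝 0) := by
  have eq_preimage (n : ℕ) : μ (k n • E \ E) = μ (E \ (k n • ·) ⁻¹' E) := by
    rw [← measure_preimage_smul μ (k n), Set.preimage_sdiff, Set.preimage_smul, inv_smul_smul]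
  simp only [eq_preimage]
  rw [← measure_empty (μ := μ)]
  refine tendsto_measure_of_tendsto_indicator_of_isFiniteMeasure atTop μ
    (fun n => hE.measurableSet.diff (hE.preimage (continuous_const_smul _)).measurableSet) ?_
  intro x
  by_cases hx : x ∈ E
  · have hkx : Tendsto (fun n => k n • x) atTop (𝓝 x) := by
      simpa only [one_smul] using hk.smul_const x
    filter_upwards [hkx (hE.mem_nhds hx)] with n hn
    simpa [hx] using hn
  · simp [hx]

/-- The Mautner phenomenon. -/
theorem mem_aestabilizer_of_tendsto_conj (hE : IsOpen E) {a g : G}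
    (ha : a ∈ aestabilizer G μ E)
    (hg : Tendsto (fun n : ℕ => a ^ n * g * (a ^ n)⁻¹) atTop (𝓝 1)) :
    g ∈ aestabilizer G μ E := by
  have han (n : ℕ) := pow_mem ha n
  have h := tendsto_measure_smul_sdiff (μ := μ) hE hg
  simp only [measure_mul_mul_smul_sdiff (han _) (inv_mem (han _)) g] at h
  exact (mem_aestabilizer_iff_measure_sdiff_eq_zero hE).2
    (tendsto_nhds_unique tendsto_const_nhds h)

end InvariantMeasure

/-! ### Homogeneous spaces of `SL(2,ℂ)` -/

theorem exists_seq_tendsto_lift {α β : Type*} {l : Filter α} [l.IsCountablyGenerated]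
    {φ : α → β} (hφ : Function.Surjective φ) {f : ℕ → β} (hf : Tendsto f atTop (map φ l)) :
    ∃ k : ℕ → α, Tendsto k atTop l ∧ ∀ n, φ (k n) = f n := by
  classical
  obtain ⟨U, hU⟩ := l.exists_antitone_basis
  let m (n : ℕ) : ℕ := Nat.findGreatest (fun i => f n ∈ φ '' U i) n
  have exists_lift (n : ℕ) : ∃ a, φ a = f n ∧ (f n ∈ φ '' U (m n) → a ∈ U (m n)) := by
    by_cases hn : f n ∈ φ '' U (m n)
    · obtain ⟨a, ha, han⟩ := hn
      exact ⟨a, han, fun _ => ha⟩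
    · obtain ⟨a, ha⟩ := hφ (f n)
      exact ⟨a, ha, fun h => absurd h hn⟩
  choose k hk hkU using exists_lift
  refine ⟨k, hU.toHasBasis.tendsto_right_iff.2 fun i _ => ?_, hk⟩
  filter_upwards [hf (image_mem_map (hU.mem i)), eventually_ge_atTop i] with n hn hin
  exact hU.antitone (Nat.le_findGreatest hin hn)
    (hkU n (Nat.findGreatest_spec (P := fun i => f n ∈ φ '' U i) hin hn))

/-- The properties of `Γ\G`, for `Γ` discrete, that the argument uses: a topological space with
a continuous transitive right action of `SL(2,ℂ)` (encoded as a left action of the opposite group)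
that factors through `PSL(2,ℂ)`, with open orbit maps and discrete stabilisers. -/
class IsHomogeneousSL2Space (X : Type*) [TopologicalSpace X] [MulAction SL2Cᵐᵒᵖ X] : Prop
    extends ContinuousSMul SL2Cᵐᵒᵖ X, IsPretransitive SL2Cᵐᵒᵖ X where
  smul_neg : ∀ (x : X) (g : SL2C), x <• (-g) = x <• g
  isOpenMap_orbit : ∀ x : X, IsOpenMap fun g : SL2C => x <• g
  eventually_eq_one : ∀ x : X, ∀ᶠ g : SL2C in 𝓝 1, x <• g = x → g = 1

section RightAction

variable {G X : Type*} [Group G] [MulAction Gᵐᵒᵖ X]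

theorem exists_op_smul_eq [IsPretransitive Gᵐᵒᵖ X] (x y : X) : ∃ g : G, x <• g = y :=
  let ⟨g, hg⟩ := exists_smul_eq Gᵐᵒᵖ x y
  ⟨unop g, hg⟩

theorem op_smul_conj {x : X} {g : G} (hg : x <• g = x) (k : G) :
    (x <• k) <• (k⁻¹ * g * k) = x <• k := by
  rw [← mul_smul, ← op_mul, mul_assoc, mul_inv_cancel_left, op_mul, mul_smul, hg]

variable [TopologicalSpace G] [TopologicalSpace X] [ContinuousSMul Gᵐᵒᵖ X]

theorem tendsto_op_smul {ι : Type*} {l : Filter ι} {f : ι → X} {k : ι → G} {x : X} {g : G}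
    (hf : Tendsto f l (𝓝 x)) (hk : Tendsto k l (𝓝 g)) :
    Tendsto (fun n => f n <• k n) l (𝓝 (x <• g)) :=
  ((continuous_op.tendsto g).comp hk).smul hf

theorem map_op_smul_nhds_one {x : X} (hx : IsOpenMap fun g : G => x <• g) :
    map (fun g : G => x <• g) (𝓝 1) = 𝓝 x := by
  have hcont : Continuous fun g : G => x <• g := continuous_op.smul continuous_const
  rw [hx.map_nhds_eq hcont.continuousAt, op_one, one_smul]

theorem exists_seq_tendsto_one_op_smul_eq [FirstCountableTopology G] [IsPretransitive Gᵐᵒᵖ X]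
    {x : X} (hx : IsOpenMap fun g : G => x <• g) {f : ℕ → X} (hf : Tendsto f atTop (𝓝 x)) :
    ∃ k : ℕ → G, Tendsto k atTop (𝓝 1) ∧ ∀ n, x <• k n = f n :=
  exists_seq_tendsto_lift (exists_op_smul_eq x) (by rwa [map_op_smul_nhds_one hx])

end RightAction

section Transitivity

variable {X : Type*} [TopologicalSpace X] [MulAction SL2Cᵐᵒᵖ X] [MeasurableSpace X]
  [BorelSpace X] {μ : Measure X} [IsFiniteMeasure μ] [SMulInvariantMeasure SL2Cᵐᵒᵖ X μ]

theorem op_mem_aestabilizer [ContinuousSMul SL2Cᵐᵒᵖ X] {E : Set X} (hE : IsOpen E)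
    {δ : ℝ} (hδ : 0 < δ) (hδ₁ : δ < 1) (hE' : op (dMat δ hδ.ne') ∈ aestabilizer SL2Cᵐᵒᵖ μ E)
    (g : SL2C) : op g ∈ aestabilizer SL2Cᵐᵒᵖ μ E := by
  have tendsto_pow (z : ℂ) : Tendsto (fun n => ((δ ^ n : ℝ) : ℂ) ^ 2 * z) atTop (𝓝 0) := by
    have h : Tendsto (fun n => δ ^ n) atTop (𝓝 0) :=
      tendsto_pow_atTop_nhds_zero_of_lt_one hδ.le hδ₁
    simpa using ((Complex.continuous_ofReal.tendsto 0).comp h).pow 2 |>.mul_const z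
  refine Subgroup.mem_unop.1 ?_
  rw [subgroup_eq_top_of_uMat_mem_of_lMat_mem (S := (aestabilizer SL2Cᵐᵒᵖ μ E).unop)]
  · exact Subgroup.mem_top g
  · refine fun z => mem_aestabilizer_of_tendsto_conj hE (inv_mem hE') ?_
    refine ((continuous_op.comp continuous_uMat).tendsto' 0 1 (by simp [uMat_zero])).comp
      (tendsto_pow z) |>.congr fun n => unop_injective ?_
    simp only [Function.comp_apply, unop_op, unop_mul, unop_inv, unop_pow, inv_pow, inv_inv,
      dMat_pow, ← mul_assoc]
    rw [eq_mul_inv_iff_mul_eq, dMat_mul_uMat]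
  · refine fun z => mem_aestabilizer_of_tendsto_conj hE hE' ?_
    refine ((continuous_op.comp continuous_lMat).tendsto' 0 1 (by simp [lMat_zero])).comp
      (tendsto_pow z) |>.congr fun n => unop_injective ?_
    simp only [Function.comp_apply, unop_op, unop_mul, unop_inv, unop_pow,
      dMat_pow, ← mul_assoc]
    rw [mul_assoc, eq_inv_mul_iff_mul_eq, lMat_mul_dMat]

variable (μ) in
/-- By the Mautner phenomenon the orbit of an open set under a diagonal matrix is conull. -/
theorem exists_op_smul_dMat_pow_mem [SecondCountableTopology X] [ContinuousSMul SL2Cᵐᵒᵖ X]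
    [IsPretransitive SL2Cᵐᵒᵖ X] [NeZero μ] {δ : ℝ} (hδ : 0 < δ) (hδ₁ : δ < 1) {W O : Set X}
    (hW : IsOpen W) (hO : IsOpen O) (hWne : W.Nonempty) (hOne : O.Nonempty) :
    ∃ n : ℕ, ∃ w ∈ W, w <• dMat δ hδ.ne' ^ n ∈ O := by
  have := isOpenPosMeasure_of_isMinimal SL2Cᵐᵒᵖ (μ := μ)
  by_contra! hdisj
  set a : SL2Cᵐᵒᵖ := op (dMat δ hδ.ne')
  set E : Set X := ⋃ n : ℕ, a ^ n • W
  have hE : IsOpen E := isOpen_iUnion fun n => hW.smul (a ^ n)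
  have hWE : W ⊆ E := fun w hw => Set.mem_iUnion.2 ⟨0, w, hw, by simp⟩
  have hEO : Disjoint E O := by
    refine Set.disjoint_iUnion_left.2 fun n => Set.disjoint_left.2 ?_
    rintro _ ⟨w, hw, rfl⟩
    exact hdisj n w hw
  have haE : a • E ⊆ E := by
    simp only [E, Set.smul_set_iUnion, ← mul_smul, ← pow_succ']
    exact Set.iUnion_subset fun n => Set.subset_iUnion (fun n => a ^ n • W) (n + 1)
  have ha : a ∈ aestabilizer SL2Cᵐᵒᵖ μ E :=
    (mem_aestabilizer_iff_measure_sdiff_eq_zero hE).2 (by simp [Set.sdiff_eq_empty.2 haE])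
  obtain ⟨w, hw⟩ := hWne
  obtain ⟨o, ho⟩ := hOne
  obtain ⟨g, rfl⟩ := exists_op_smul_eq (G := SL2C) w o
  refine ((hE.smul (op g)).inter hO).measure_ne_zero μ
    ⟨_, Set.smul_mem_smul_set (hWE hw), ho⟩ (measure_mono_null ?_
    ((mem_aestabilizer_iff_measure_sdiff_eq_zero hE).1 (op_mem_aestabilizer hE hδ hδ₁ ha g)))
  exact Set.inter_subset_inter_right _ fun x hx hxE => hEO.le_bot ⟨hxE, hx⟩

end Transitivity

theorem coe_dMat_conj (δ : ℝ) (hδ : δ ≠ 0) (g : SL2C) :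
    ((dMat δ hδ)⁻¹ * g * dMat δ hδ : SL2C) =
      (!![g 0 0, ((δ : ℂ) ^ 2)⁻¹ * g 0 1; (δ : ℂ) ^ 2 * g 1 0, g 1 1] :
        Matrix (Fin 2) (Fin 2) ℂ) := by
  have : (δ : ℂ) ≠ 0 := by exact_mod_cast hδ
  ext i j
  fin_cases i <;> fin_cases j <;> simp [-cons_mul] <;> field_simp

theorem tendsto_dMat_conj {l : ℕ → SL2C} (hl : Tendsto l atTop (𝓝 1))
    (hl₀₁ : ∀ᶠ n in atTop, l n 0 1 = 0) {δ : ℕ → ℝ} (hδ : ∀ n, 0 < δ n) (hδ₁ : ∀ n, δ n ≤ 1) :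
    Tendsto (fun n => (dMat (δ n) (hδ n).ne')⁻¹ * l n * dMat (δ n) (hδ n).ne') atTop (𝓝 1) := by
  have hl' := tendsto_SL2C.1 hl
  have tendsto_entry : Tendsto (fun n => (δ n : ℂ) ^ 2 * l n 1 0) atTop (𝓝 0) := by
    refine squeeze_zero_norm (fun n => ?_) (by simpa using (hl' 1 0).norm)
    rw [norm_mul, norm_pow, Complex.norm_of_nonneg (hδ n).le]
    exact mul_le_of_le_one_left (norm_nonneg _) (pow_le_one₀ (hδ n).le (hδ₁ n))
  refine tendsto_SL2C.2 fun i j => ?_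
  simp only [coe_dMat_conj]
  fin_cases i <;> fin_cases j
  · simpa using hl' 0 0
  · exact tendsto_const_nhds.congr' (hl₀₁.mono fun n hn => by simp [hn])
  · simpa using tendsto_entry
  · simpa using hl' 1 1

section Invariance

variable {X : Type*} [TopologicalSpace X] [MulAction SL2Cᵐᵒᵖ X]

/-- Invariance of a set under the group `A` of positive diagonal matrices. -/
def AInvariant (F : Set X) : Prop :=
  ∀ x ∈ F, ∀ (δ : ℝ) (hδ : 0 < δ), x <• dMat δ hδ.ne' ∈ F

/-- Invariance of a set under the group `U` of real upper triangular unipotent matrices. -/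
def UInvariant (F : Set X) : Prop :=
  ∀ x ∈ F, ∀ t : ℝ, x <• uMat t ∈ F

/-- An element of `SL(2,ℂ)` near `1` is a product of an upper unipotent and a lower triangular
matrix, and contraction by `A` makes the second factor disappear. -/
theorem exists_seq_tendsto_op_smul_uMat_dMat [IsHomogeneousSL2Space X] {z p : X} {w : ℕ → X}
    (hw : Tendsto w atTop (𝓝 z)) {δ : ℕ → ℝ} (hδ : ∀ n, 0 < δ n) (hδ₁ : ∀ n, δ n ≤ 1)
    (hp : Tendsto (fun n => w n <• dMat (δ n) (hδ n).ne') atTop (𝓝 p)) :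
    ∃ ζ : ℕ → ℂ,
      Tendsto (fun n => z <• uMat (ζ n) <• dMat (δ n) (hδ n).ne') atTop (𝓝 p) := by
  obtain ⟨g, hg, hgw⟩ := exists_seq_tendsto_one_op_smul_eq
    (IsHomogeneousSL2Space.isOpenMap_orbit z) hw
  have hg' := tendsto_SL2C.1 hg
  have hg₁₁ : ∀ᶠ n in atTop, g n 1 1 ≠ 0 := (hg' 1 1).eventually_ne (by simp)
  let ζ (n : ℕ) : ℂ := g n 0 1 / g n 1 1
  have hζ : Tendsto ζ atTop (𝓝 0) := by
    simpa [ζ, Pi.div_def] using (hg' 0 1).div (hg' 1 1) (by simp)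
  have hl : Tendsto (fun n => (uMat (ζ n))⁻¹ * g n) atTop (𝓝 1) := by
    simpa [uMat_zero] using ((continuous_uMat.tendsto 0).comp hζ).inv.mul hg
  have hconj := tendsto_dMat_conj hl (hg₁₁.mono fun n hn => by
    simp [ζ, hn]) hδ hδ₁
  refine ⟨ζ, (tendsto_op_smul hp hconj.inv).congr' (.of_forall fun n => ?_) |>.trans (by simp)⟩
  simp only [← hgw, ← mul_smul, ← op_mul]
  congr 2
  group

variable [SecondCountableTopology X] [IsHomogeneousSL2Space X] [MeasurableSpace X]
  [BorelSpace X] (μ : Measure X) [IsFiniteMeasure μ] [SMulInvariantMeasure SL2Cᵐᵒᵖ X μ] [NeZero μ]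

include μ in
theorem eq_univ_of_op_smul_uMat_mem {F : Set X} (hF : IsClosed F) (hA : AInvariant F) {z : X}
    (hz : ∀ ζ : ℂ, z <• uMat ζ ∈ F) : F = Set.univ := by
  refine Set.eq_univ_of_forall fun p => ?_
  obtain ⟨W, hW, hWz⟩ := (nhds_basis_opens z).exists_antitone_subbasis
  obtain ⟨O, hO, hOp⟩ := (nhds_basis_opens p).exists_antitone_subbasis
  have exists_return (n : ℕ) := exists_op_smul_dMat_pow_mem μ (δ := 1 / 2) (by norm_num)
    (by norm_num) (hW n).2 (hO n).2 ⟨z, (hW n).1⟩ ⟨p, (hO n).1⟩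
  choose m w hwW hwO using exists_return
  simp only [dMat_pow] at hwO
  obtain ⟨ζ, hζ⟩ := exists_seq_tendsto_op_smul_uMat_dMat (hWz.tendsto hwW)
    (fun n => pow_pos one_half_pos (m n)) (fun n => pow_le_one₀ (by norm_num) (by norm_num))
    (hOp.tendsto hwO)
  exact hF.mem_of_tendsto hζ (.of_forall fun n => hA _ (hz _) _ (by positivity))

end Invariance

/-! ### Traceless parts and small elements of `SL(2,ℂ)` -/

/-- The traceless part of a matrix in `SL(2,ℂ)`. It vanishes exactly at `±1` and is equivariant
under conjugation, so that its norm measures the distance to the centre. -/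
def tracelessPart (g : SL2C) : Matrix (Fin 2) (Fin 2) ℂ :=
  g - (trace (g : Matrix (Fin 2) (Fin 2) ℂ) / 2) • 1

theorem continuous_tracelessPart : Continuous tracelessPart := by
  unfold tracelessPart
  have h : Continuous fun g : SL2C => (g : Matrix (Fin 2) (Fin 2) ℂ) := continuous_subtype_val
  exact h.sub ((h.matrix_trace.div_const 2).smul continuous_const)

theorem coe_eq_smul_one_add_tracelessPart (g : SL2C) :
    (g : Matrix (Fin 2) (Fin 2) ℂ) =
      (trace (g : Matrix (Fin 2) (Fin 2) ℂ) / 2) • 1 + tracelessPart g := by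
  simp [tracelessPart]

theorem coe_inv_eq_smul_one_sub_tracelessPart (g : SL2C) :
    ((g⁻¹ : SL2C) : Matrix (Fin 2) (Fin 2) ℂ) =
      (trace (g : Matrix (Fin 2) (Fin 2) ℂ) / 2) • 1 - tracelessPart g := by
  ext i j
  fin_cases i <;> fin_cases j <;> simp [tracelessPart, trace_fin_two] <;> ring

theorem tracelessPart_mul_self (g : SL2C) :
    tracelessPart g * tracelessPart g =
      ((trace (g : Matrix (Fin 2) (Fin 2) ℂ) / 2) ^ 2 - 1) • 1 := by
  have hdet := SL2C_det g
  ext i j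
  fin_cases i <;> fin_cases j <;> simp [tracelessPart, trace_fin_two, -cons_mul]
  · linear_combination (-1) * hdet
  · ring
  · ring
  · linear_combination (-1) * hdet

theorem tracelessPart_conj (k g : SL2C) :
    tracelessPart (k⁻¹ * g * k) = (k⁻¹ : SL2C) * tracelessPart g * k := by
  have h : ((k⁻¹ : SL2C) : Matrix (Fin 2) (Fin 2) ℂ) * k = 1 := by
    rw [← Matrix.SpecialLinearGroup.coe_mul, inv_mul_cancel, Matrix.SpecialLinearGroup.coe_one]
  have htr : trace ((k⁻¹ * g * k : SL2C) : Matrix (Fin 2) (Fin 2) ℂ) =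
      trace (g : Matrix (Fin 2) (Fin 2) ℂ) := by
    rw [mul_assoc, Matrix.SpecialLinearGroup.coe_mul, trace_mul_comm,
      ← Matrix.SpecialLinearGroup.coe_mul, mul_inv_cancel_right]
  rw [tracelessPart, tracelessPart, htr, Matrix.SpecialLinearGroup.coe_mul,
    Matrix.SpecialLinearGroup.coe_mul, mul_sub, sub_mul, mul_smul_comm, smul_mul_assoc, mul_one, h]

theorem tracelessPart_inv (g : SL2C) : tracelessPart g⁻¹ = -tracelessPart g := by
  ext i j
  fin_cases i <;> fin_cases j <;> simp [tracelessPart, trace_fin_two] <;> ring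

theorem tracelessPart_uMat (z : ℂ) : tracelessPart (uMat z) = !![0, z; 0, 0] := by
  ext i j
  fin_cases i <;> fin_cases j <;> simp [tracelessPart, trace_fin_two]

theorem norm_tracelessPart_uMat (z : ℂ) : ‖tracelessPart (uMat z)‖ = ‖z‖ := by
  rw [tracelessPart_uMat]
  simp [Matrix.linfty_opNorm_def, Fin.univ_succ]

theorem tracelessPart_eq_zero_iff {g : SL2C} : tracelessPart g = 0 ↔ g = 1 ∨ g = -1 := by
  constructor
  · intro h
    have hg := coe_eq_smul_one_add_tracelessPart g
    have hsq := tracelessPart_mul_self g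
    rw [h, mul_zero, eq_comm, smul_eq_zero_iff_left one_ne_zero, sub_eq_zero] at hsq
    rcases sq_eq_one_iff.1 hsq with hs | hs
    all_goals rw [h, hs] at hg
    · exact .inl (Subtype.ext (by simpa using hg))
    · exact .inr (Subtype.ext (by simpa using hg))
  · rintro (rfl | rfl) <;> simp [tracelessPart]

section Comparison

variable {X Y Z : Type*} [MeasurableSpace X] [MeasurableSpace Z] {μ : Measure X} {ν : Measure Z}
  {φ : Y → X} {B : Set Y} {V : Set (Y × Z)} {c : ENNReal}

theorem mul_measure_image_le_prod [SFinite ν] (hV : MeasurableSet (Prod.map φ id '' V))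
    (hB : MeasurableSet (φ '' B)) (h : ∀ b ∈ B, c ≤ ν (Prod.mk b ⁻¹' V)) :
    c * μ (φ '' B) ≤ (μ.prod ν) (Prod.map φ id '' V) := by
  rw [Measure.prod_apply hV, ← setLIntegral_const, ← lintegral_indicator hB]
  refine lintegral_mono fun x => Set.indicator_apply_le' ?_ fun _ => zero_le
  rintro ⟨b, hb, rfl⟩
  exact (h b hb).trans (measure_mono fun k hk => ⟨(b, k), hk, rfl⟩)

theorem prod_le_mul_measure_image [SFinite ν] (hV : MeasurableSet (Prod.map φ id '' V))
    (hB : MeasurableSet (φ '' B)) (h : ∀ b ∈ B, ν (Prod.mk b ⁻¹' V) ≤ c)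
    (hinj : Set.InjOn φ B) (hVB : ∀ v ∈ V, v.1 ∈ B) :
    (μ.prod ν) (Prod.map φ id '' V) ≤ c * μ (φ '' B) := by
  rw [Measure.prod_apply hV, ← setLIntegral_const, ← lintegral_indicator hB]
  refine lintegral_mono fun x => ?_
  by_cases hx : x ∈ φ '' B
  · obtain ⟨b, hb, rfl⟩ := hx
    rw [Set.indicator_of_mem (Set.mem_image_of_mem φ hb)]
    refine le_trans (measure_mono ?_) (h b hb)
    rintro _ ⟨v, hv, hvb⟩
    obtain ⟨hv₁, rfl⟩ := Prod.mk.inj hvb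
    rwa [Set.mem_preimage, ← hinj (hVB v hv) hb hv₁]
  · refine (measure_mono_null ?_ measure_empty).trans_le (zero_le)
    rintro _ ⟨v, hv, hvx⟩
    exact hx ⟨v.1, hVB v hv, (Prod.mk.inj hvx).1⟩

end Comparison

section OrbitVolume

variable {G X : Type*} [Group G] [TopologicalSpace G] [IsTopologicalGroup G]
  [SecondCountableTopology G] [MeasurableSpace G] [BorelSpace G] [TopologicalSpace X]
  [MeasurableSpace X] [BorelSpace X] [MulAction Gᵐᵒᵖ X]
  [IsPretransitive Gᵐᵒᵖ X] {lam : Measure G} {μ : Measure X} [SFinite lam] [SFinite μ]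

/-- Both sides bound the measure of the set of `(x, k)` with `x ∈ y <• B` and `x <• k ∈ y' <• B`. -/
theorem measure_orbit_image_le [lam.IsMulLeftInvariant] [lam.IsMulRightInvariant]
    [SMulInvariantMeasure Gᵐᵒᵖ X μ] (hopen : ∀ x : X, IsOpenMap fun g : G => x <• g)
    {B : Set G} (hB : IsOpen B) (y y' : X) (hinj : Set.InjOn (fun g : G => y' <• g) B) :
    lam B * μ ((fun g : G => y <• g) '' B) ≤ lam B⁻¹ * μ ((fun g : G => y' <• g) '' B) := by
  obtain ⟨h, rfl⟩ := exists_op_smul_eq (G := G) y y'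
  let V : Set (G × G) := {p | p.1 ∈ B ∧ h⁻¹ * p.1 * p.2 ∈ B}
  let V' : Set (G × G) := {p | p.1 ∈ B ∧ h * p.1 * p.2⁻¹ ∈ B}
  have hV : IsOpen V := (hB.preimage continuous_fst).inter (hB.preimage (by fun_prop))
  have hV' : IsOpen V' := (hB.preimage continuous_fst).inter (hB.preimage (by fun_prop))
  have hQ := ((hopen y).prodMap IsOpenMap.id _ hV).measurableSet
  have hQ' := ((hopen (y <• h)).prodMap IsOpenMap.id _ hV').measurableSet
  have slice_inv_smul (k : G) (x : X) : (x, k) ∈ Prod.map (fun g : G => y <• h <• g) id '' V' ↔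
      (x <• k⁻¹, k) ∈ Prod.map (fun g : G => y <• g) id '' V := by
    constructor
    · rintro ⟨⟨b, j⟩, ⟨hb, hb'⟩, hbk⟩
      obtain ⟨rfl, rfl⟩ := Prod.mk.inj hbk
      exact ⟨(h * b * j⁻¹, j), ⟨hb', by simpa [mul_assoc] using hb⟩, by simp [mul_smul]⟩
    · rintro ⟨⟨b, j⟩, ⟨hb, hb'⟩, hbk⟩
      obtain ⟨hx, rfl⟩ := Prod.mk.inj hbk
      refine ⟨(h⁻¹ * b * j, j), ⟨hb', by simpa [mul_assoc] using hb⟩, ?_⟩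
      simp_all [mul_smul]
  calc lam B * μ ((fun g : G => y <• g) '' B)
    _ ≤ (μ.prod lam) (Prod.map (fun g : G => y <• g) id '' V) := by
        refine mul_measure_image_le_prod hQ (hopen y _ hB).measurableSet fun b hb => le_of_eq ?_
        rw [← measure_preimage_mul lam (h⁻¹ * b)]
        exact congrArg lam (Set.ext fun k => (and_iff_right hb).symm)
    _ = (μ.prod lam) (Prod.map (fun g : G => y <• h <• g) id '' V') := by
        rw [Measure.prod_apply_symm hQ, Measure.prod_apply_symm hQ']
        refine lintegral_congr fun k => ?_
        rw [← measure_preimage_smul μ (op k⁻¹)]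
        exact congrArg μ (Set.ext fun x => (slice_inv_smul k x).symm)
    _ ≤ lam B⁻¹ * μ ((fun g : G => y <• h <• g) '' B) := by
        refine prod_le_mul_measure_image hQ' (hopen _ _ hB).measurableSet (fun b _ => ?_) hinj
          fun v hv => hv.1
        rw [← measure_preimage_mul_right lam (h * b)⁻¹ B⁻¹]
        refine measure_mono fun k hk => ?_
        simpa [mul_assoc] using hk.2

end OrbitVolume

section ThickPart

variable {X : Type*} [MulAction SL2Cᵐᵒᵖ X]

variable (X) in
/-- The `ε`-thick part of a homogeneous space: the points whose stabiliser contains no element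
`ε`-close to, but different from, `±1`. Closeness is measured by the traceless part. -/
def thickPart (ε : ℝ) : Set X :=
  {x | ∀ g : SL2C, x <• g = x → tracelessPart g ≠ 0 → ε ≤ ‖tracelessPart g‖}

variable {ε : ℝ}

theorem exists_of_op_smul_notMem_thickPart {x : X} {k : SL2C}
    (hk : x <• k ∉ thickPart X ε) :
    ∃ g : SL2C, x <• g = x ∧ tracelessPart g ≠ 0 ∧ ‖tracelessPart (k⁻¹ * g * k)‖ < ε := by
  simp only [thickPart, Set.mem_ofPred_eq, not_forall, not_le] at hk
  obtain ⟨g, hg, hg₀, hgε⟩ := hk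
  have hconj : k⁻¹ * (k * g * k⁻¹) * k = g := by group
  refine ⟨k * g * k⁻¹, ?_, fun h => hg₀ ?_, by rwa [hconj]⟩
  · simpa [← mul_smul, ← op_mul] using op_smul_conj hg k⁻¹
  · rw [← hconj, tracelessPart_conj, h, mul_zero, zero_mul]

theorem exists_isOpen_injOn_of_mem_thickPart (hε : 0 < ε) :
    ∃ B C : Set SL2C, IsOpen B ∧ 1 ∈ B ∧ IsCompact C ∧ B ⊆ C ∧
      ∀ x ∈ thickPart X ε, Set.InjOn (fun g : SL2C => x <• g) B := by
  have small_quotient : ∀ᶠ p : SL2C × SL2C in 𝓝 1 ×ˢ 𝓝 1,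
      ‖tracelessPart (p.1 * p.2⁻¹)‖ < ε ∧ p.1 * p.2⁻¹ ≠ -1 := by
    have hquot : Tendsto (fun p : SL2C × SL2C => p.1 * p.2⁻¹) (𝓝 1 ×ˢ 𝓝 1) (𝓝 1) := by
      simpa using (tendsto_fst (f := 𝓝 (1 : SL2C)) (g := 𝓝 1)).mul tendsto_snd.inv
    have hsmall : ∀ᶠ g in 𝓝 (1 : SL2C), ‖tracelessPart g‖ < ε :=
      continuous_tracelessPart.norm.continuousAt.eventually_lt_const
        (by simpa [tracelessPart_eq_zero_iff.2 (.inl rfl)] using hε)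
    exact hquot.eventually (hsmall.and SL2C_ne_neg_one)
  obtain ⟨V, hV, hVε⟩ := mem_prod_self_iff.1 small_quotient
  obtain ⟨C, hC, hC₁⟩ := exists_compact_mem_nhds (1 : SL2C)
  refine ⟨interior (V ∩ C), C, isOpen_interior, mem_interior_iff_mem_nhds.2 (inter_mem hV hC₁), hC,
    interior_subset.trans Set.inter_subset_right, fun x hx b hb b' hb' hbb' => ?_⟩
  obtain ⟨hlt, hne⟩ := hVε (Set.mk_mem_prod (interior_subset hb).1 (interior_subset hb').1)
  by_contra hbne
  have hstab : x <• (b * b'⁻¹) = x := by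
    rw [op_mul, mul_smul, show x <• b = x <• b' from hbb', ← mul_smul, ← op_mul, mul_inv_cancel,
      op_one, one_smul]
  refine (hx _ hstab fun h => ?_).not_gt hlt
  exact (tracelessPart_eq_zero_iff.1 h).elim (fun h => hbne (mul_inv_eq_one.1 h)) hne

variable [TopologicalSpace X]

theorem isClosed_thickPart [FirstCountableTopology X] [IsHomogeneousSL2Space X] :
    IsClosed (thickPart X ε) := by
  refine IsSeqClosed.isClosed fun f y hf hfy g hg hg₀ => ?_
  obtain ⟨k, hk, hkf⟩ := exists_seq_tendsto_one_op_smul_eq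
    (IsHomogeneousSL2Space.isOpenMap_orbit y) hfy
  have hconj : Tendsto (fun n => (k n)⁻¹ * g * k n) atTop (𝓝 g) := by
    simpa using (hk.inv.mul_const g).mul hk
  have hτ := (continuous_tracelessPart.tendsto g).comp hconj
  refine ge_of_tendsto hτ.norm ((hτ.eventually_ne hg₀).mono fun n hn => hf n _ ?_ hn)
  simp only [← hkf, ← mul_smul, ← op_mul, mul_assoc, mul_inv_cancel_left]
  rw [op_mul, mul_smul, hg]

variable [SecondCountableTopology X] [IsHomogeneousSL2Space X] [MeasurableSpace X]
  [BorelSpace X] (μ : Measure X) [IsFiniteMeasure μ] [SMulInvariantMeasure SL2Cᵐᵒᵖ X μ] [NeZero μ]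

include μ in
/-- Orbit images of a small open set at thick points have measure bounded below, so only finitely
many of them are disjoint. -/
theorem exists_finset_thickPart_subset {B C : Set SL2C} (hB : IsOpen B) (hB₁ : 1 ∈ B)
    (hC : IsCompact C) (hBC : B ⊆ C)
    (hinj : ∀ x ∈ thickPart X ε, Set.InjOn (fun g : SL2C => x <• g) B) :
    ∃ s : Finset X, thickPart X ε ⊆ ⋃ x ∈ s, (fun g : SL2C => x <• g) '' (C * C⁻¹) := by
  have hopen (x : X) := IsHomogeneousSL2Space.isOpenMap_orbit x
  by_contra! hcover
  obtain ⟨x, hx, hx_notMem⟩ := exists_seq_of_forall_finset_exists (fun y => y ∈ thickPart X ε)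
    (fun x y => y ∉ (fun g : SL2C => x <• g) '' (C * C⁻¹))
    fun s _ => by simpa [Set.not_subset] using hcover s
  have hdisj : Pairwise (Function.onFun Disjoint fun n => (fun g : SL2C => x n <• g) '' B) := by
    refine pairwise_disjoint_on _ |>.2 fun m n hmn => Set.disjoint_left.2 ?_
    rintro _ ⟨b, hb, rfl⟩ ⟨b', hb', hbb'⟩
    refine hx_notMem m n hmn ⟨b * b'⁻¹, Set.mul_mem_mul (hBC hb) (Set.inv_mem_inv.2 (hBC hb')), ?_⟩
    simp only [op_mul, mul_smul] at hbb' ⊢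
    rw [← hbb', ← mul_smul, ← op_mul, mul_inv_cancel, op_one, one_smul]
  set c := Measure.haar B / Measure.haar B⁻¹ * μ ((fun g : SL2C => x 0 <• g) '' B)
  have hc : c ≠ 0 := by
    have := isOpenPosMeasure_of_isMinimal SL2Cᵐᵒᵖ (μ := μ)
    refine mul_ne_zero (ENNReal.div_ne_zero.2 ⟨(hB.measure_pos _ ⟨1, hB₁⟩).ne', ?_⟩)
      ((hopen (x 0) B hB).measure_pos μ ⟨_, 1, hB₁, rfl⟩).ne'
    exact measure_ne_top_of_subset (Set.inv_subset_inv.2 hBC) hC.inv.measure_ne_top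
  have hle (n : ℕ) : c ≤ μ ((fun g : SL2C => x n <• g) '' B) := by
    simp only [c, ← ENNReal.mul_div_right_comm]
    exact ENNReal.div_le_of_le_mul' (measure_orbit_image_le hopen hB (x 0) (x n) (hinj _ (hx n)))
  refine measure_ne_top μ (⋃ n, (fun g : SL2C => x n <• g) '' B) (top_unique ?_)
  rw [measure_iUnion hdisj fun n => (hopen (x n) B hB).measurableSet,
    ← ENNReal.tsum_const_eq_top_of_ne_zero (α := ℕ) hc]
  exact ENNReal.tsum_le_tsum hle

include μ in
theorem isCompact_thickPart (hε : 0 < ε) : IsCompact (thickPart X ε) := by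
  obtain ⟨B, C, hB, hB₁, hC, hBC, hinj⟩ := exists_isOpen_injOn_of_mem_thickPart (X := X) hε
  obtain ⟨s, hs⟩ := exists_finset_thickPart_subset μ hB hB₁ hC hBC hinj
  refine (s.isCompact_biUnion fun x _ => ?_).of_isClosed_subset isClosed_thickPart hs
  exact (hC.mul hC.inv).image (continuous_op.smul continuous_const)

end ThickPart

open scoped commutatorElement

theorem norm_coe_le (g : SL2C) :
    ‖(g : Matrix (Fin 2) (Fin 2) ℂ)‖ ≤ 1 + 2 * ‖tracelessPart g‖ := by
  have hsq : ‖(trace (g : Matrix (Fin 2) (Fin 2) ℂ) / 2) ^ 2 - 1‖ ≤ ‖tracelessPart g‖ ^ 2 := by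
    calc _ = ‖tracelessPart g * tracelessPart g‖ := by
          rw [tracelessPart_mul_self, norm_smul, norm_one, mul_one]
      _ ≤ _ := (norm_mul_le _ _).trans_eq (sq _).symm
  have htr : ‖trace (g : Matrix (Fin 2) (Fin 2) ℂ) / 2‖ ≤ 1 + ‖tracelessPart g‖ := by
    refine le_of_sq_le_sq ?_ (by positivity)
    have h := norm_le_norm_add_norm_sub' ((trace (g : Matrix (Fin 2) (Fin 2) ℂ) / 2) ^ 2) 1
    rw [norm_pow, norm_one] at h
    nlinarith [norm_nonneg (tracelessPart g)]
  calc ‖(g : Matrix (Fin 2) (Fin 2) ℂ)‖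
      ≤ ‖(trace (g : Matrix (Fin 2) (Fin 2) ℂ) / 2) • (1 : Matrix (Fin 2) (Fin 2) ℂ)‖
        + ‖tracelessPart g‖ := by
        conv_lhs => rw [coe_eq_smul_one_add_tracelessPart g]
        exact norm_add_le _ _
    _ ≤ 1 + 2 * ‖tracelessPart g‖ := by
        rw [norm_smul, norm_one]
        linarith

theorem coe_mul_sub_coe_mul (A B : SL2C) :
    (A * B - B * A : Matrix (Fin 2) (Fin 2) ℂ) =
      tracelessPart A * tracelessPart B - tracelessPart B * tracelessPart A := by
  simp only [tracelessPart, sub_mul, mul_sub, smul_mul_assoc, mul_smul_comm, one_mul, mul_one]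
  module

theorem norm_commutatorElement_sub_one_le (A B : SL2C) :
    ‖((⁅A, B⁆ : SL2C) : Matrix (Fin 2) (Fin 2) ℂ) - 1‖ ≤ 2 * ‖tracelessPart A‖ *
      ‖tracelessPart B‖ * ((1 + 2 * ‖tracelessPart A‖) * (1 + 2 * ‖tracelessPart B‖)) := by
  have hfactor : ((⁅A, B⁆ : SL2C) : Matrix (Fin 2) (Fin 2) ℂ) - 1 =
      (A * B - B * A) * ((A⁻¹ : SL2C) * (B⁻¹ : SL2C)) := by
    have hBA : (B * A * ((A⁻¹ : SL2C) * (B⁻¹ : SL2C)) : Matrix (Fin 2) (Fin 2) ℂ) = 1 := by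
      rw [← Matrix.SpecialLinearGroup.coe_mul, ← Matrix.SpecialLinearGroup.coe_mul,
        ← Matrix.SpecialLinearGroup.coe_mul, show B * A * (A⁻¹ * B⁻¹) = 1 by group,
        Matrix.SpecialLinearGroup.coe_one]
    rw [sub_mul, hBA, commutatorElement_def]
    simp only [Matrix.SpecialLinearGroup.coe_mul, mul_assoc]
  rw [hfactor, coe_mul_sub_coe_mul]
  refine (norm_mul_le _ _).trans ?_
  gcongr
  · refine (norm_sub_le _ _).trans ((add_le_add (norm_mul_le _ _) (norm_mul_le _ _)).trans_eq ?_)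
    ring
  · refine (norm_mul_le _ _).trans ?_
    gcongr
    · simpa [tracelessPart_inv] using norm_coe_le A⁻¹
    · simpa [tracelessPart_inv] using norm_coe_le B⁻¹

theorem norm_tracelessPart_commutatorElement_le (A B : SL2C) :
    ‖tracelessPart ⁅A, B⁆‖ ≤ 2 * ‖tracelessPart A‖ * ‖tracelessPart B‖ *
      ((1 + 2 * ‖tracelessPart A‖) * (1 + 2 * ‖tracelessPart B‖)) := by
  have htwo : (2 : ℂ) • tracelessPart ⁅A, B⁆ =
      ((⁅A, B⁆ : SL2C) - 1) - ((⁅B, A⁆ : SL2C) - 1 : Matrix (Fin 2) (Fin 2) ℂ) := by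
    rw [← commutatorElement_inv A B, coe_inv_eq_smul_one_sub_tracelessPart]
    linear_combination (norm := module) (-1 : ℂ) • coe_eq_smul_one_add_tracelessPart ⁅A, B⁆
  have hnorm := (congrArg norm htwo).trans_le (norm_sub_le _ _)
  rw [norm_smul, Complex.norm_ofNat] at hnorm
  linarith [norm_commutatorElement_sub_one_le A B, norm_commutatorElement_sub_one_le B A]

theorem exists_eq_smul_of_mul_comm {K : Type*} [Field K] [NeZero (2 : K)]
    {M N : Matrix (Fin 2) (Fin 2) K} (hM : trace M = 0) (hN : trace N = 0) (hcomm : M * N = N * M)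
    (hM₀ : M ≠ 0) : ∃ m : K, N = m • M := by
  have h₀₀ : M 0 1 * N 1 0 = M 1 0 * N 0 1 := by
    have h := congrFun₂ hcomm 0 0
    simp only [Matrix.mul_apply, Fin.sum_univ_two] at h
    linear_combination h
  rw [trace_fin_two, ← eq_neg_iff_add_eq_zero] at hM hN
  have h₀₁ : M 1 1 * N 0 1 = N 1 1 * M 0 1 := by
    have h := congrFun₂ hcomm 0 1
    simp only [Matrix.mul_apply, Fin.sum_univ_two, hM, hN] at h
    refine mul_left_cancel₀ (NeZero.ne (2 : K)) ?_
    linear_combination -h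
  have h₁₀ : M 1 1 * N 1 0 = N 1 1 * M 1 0 := by
    have h := congrFun₂ hcomm 1 0
    simp only [Matrix.mul_apply, Fin.sum_univ_two, hM, hN] at h
    refine mul_left_cancel₀ (NeZero.ne (2 : K)) ?_
    linear_combination h
  have hentry : M 1 1 ≠ 0 ∨ M 0 1 ≠ 0 ∨ M 1 0 ≠ 0 := by
    by_contra! h
    refine hM₀ (Matrix.ext fun i j => ?_)
    fin_cases i <;> fin_cases j <;> simp [h, hM]
  rcases hentry with h | h | h
  · refine ⟨N 1 1 / M 1 1, Matrix.ext fun i j => ?_⟩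
    fin_cases i <;> fin_cases j <;> simp [h, hM, hN] <;> field_simp <;> grind
  · refine ⟨N 0 1 / M 0 1, Matrix.ext fun i j => ?_⟩
    fin_cases i <;> fin_cases j <;> simp [h, hM, hN] <;> field_simp <;> grind
  · refine ⟨N 1 0 / M 1 0, Matrix.ext fun i j => ?_⟩
    fin_cases i <;> fin_cases j <;> simp [h, hM, hN] <;> field_simp <;> grind

theorem exists_tracelessPart_eq_smul_of_commute {A B : SL2C} (h : Commute A B)
    (hA : tracelessPart A ≠ 0) : ∃ m : ℂ, tracelessPart B = m • tracelessPart A := by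
  have trace_eq_zero (g : SL2C) : trace (tracelessPart g) = 0 := by
    simp [tracelessPart, trace_fin_two]
  refine exists_eq_smul_of_mul_comm (trace_eq_zero A) (trace_eq_zero B) ?_ hA
  have hmul : (A * B : Matrix (Fin 2) (Fin 2) ℂ) = B * A := congrArg Subtype.val h.eq
  rw [← sub_eq_zero, ← coe_mul_sub_coe_mul, hmul, sub_self]

theorem norm_entry_le (M : Matrix (Fin 2) (Fin 2) ℂ) (i j : Fin 2) : ‖M i j‖ ≤ ‖M‖ := by
  rw [Matrix.linfty_opNorm_def]
  exact_mod_cast (Finset.single_le_sum (f := fun j => ‖M i j‖₊) (fun _ _ => zero_le)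
    (Finset.mem_univ j)).trans (Finset.le_sup (f := fun i => ∑ j, ‖M i j‖₊) (Finset.mem_univ i))

theorem isCompact_setOf_norm_tracelessPart_le (R : ℝ) :
    IsCompact {g : SL2C | ‖tracelessPart g‖ ≤ R} := by
  have hball := isClosedEmbedding_entries.isCompact_preimage
    (isCompact_closedBall (0 : Fin 2 → Fin 2 → ℂ) (1 + 2 * |R|))
  refine hball.of_isClosed_subset (isClosed_le continuous_tracelessPart.norm continuous_const)
    fun g hg => ?_
  simp only [Set.mem_preimage, mem_closedBall_zero_iff]
  have hR : 0 ≤ 1 + 2 * |R| := by positivity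
  refine (pi_norm_le_iff_of_nonneg hR).2 fun i => (pi_norm_le_iff_of_nonneg hR).2 fun j => ?_
  calc ‖g i j‖ ≤ 1 + 2 * ‖tracelessPart g‖ := (norm_entry_le g i j).trans (norm_coe_le g)
    _ ≤ 1 + 2 * |R| := by gcongr; exact hg.trans (le_abs_self R)

section Nondivergence

variable {X : Type*} [TopologicalSpace X] [MulAction SL2Cᵐᵒᵖ X] [IsHomogeneousSL2Space X]

theorem finite_setOf_norm_tracelessPart_le (x : X) (R : ℝ) :
    {g : SL2C | x <• g = x ∧ ‖tracelessPart g‖ ≤ R}.Finite := by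
  let S : Subgroup SL2C := (stabilizer SL2Cᵐᵒᵖ x).unop
  have : DiscreteTopology S := by
    refine discreteTopology_iff_isOpen_singleton_one.2 (isOpen_singleton_iff_nhds_eq_pure _ |>.2 ?_)
    refine le_antisymm (le_pure_iff.2 ?_) (pure_le_nhds _)
    filter_upwards [continuousAt_subtype_val.eventually
      (IsHomogeneousSL2Space.eventually_eq_one x)] with g hg
    exact Subtype.ext (hg g.2)
  have hcompact := (isCompact_setOf_norm_tracelessPart_le R).inter_left S.isClosed_of_discrete
  exact hcompact.finite (this.isDiscrete.mono Set.inter_subset_left)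

/-- The shortest element of a discrete group near the identity commutes with all other short
elements, since commutators of short elements are even shorter. -/
theorem exists_tracelessPart_eq_smul {x : X} {A B : SL2C}
    (hA : x <• A = x) (hA₀ : tracelessPart A ≠ 0) (hA' : ‖tracelessPart A‖ ≤ 1 / 8)
    (hB : x <• B = x) (hB' : ‖tracelessPart B‖ ≤ 1 / 8) :
    ∃ m : ℂ, tracelessPart B = m • tracelessPart A := by
  have hfin : {g : SL2C | (x <• g = x ∧ ‖tracelessPart g‖ ≤ 1 / 8) ∧ tracelessPart g ≠ 0}.Finite :=
    (finite_setOf_norm_tracelessPart_le x (1 / 8)).subset fun g hg => hg.1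
  obtain ⟨C, ⟨⟨hC, hC'⟩, hC₀⟩, hmin⟩ :=
    Set.exists_min_image _ (fun g => ‖tracelessPart g‖) hfin ⟨A, ⟨hA, hA'⟩, hA₀⟩
  have hparallel (B : SL2C) (hB : x <• B = x) (hB' : ‖tracelessPart B‖ ≤ 1 / 8) :
      ∃ m : ℂ, tracelessPart B = m • tracelessPart C := by
    refine exists_tracelessPart_eq_smul_of_commute ?_ hC₀
    have hbound : 2 * ‖tracelessPart C‖ * ‖tracelessPart B‖ * ((1 + 2 * ‖tracelessPart C‖) *
        (1 + 2 * ‖tracelessPart B‖)) ≤ 25 / 64 * ‖tracelessPart C‖ := by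
      calc _ ≤ 2 * ‖tracelessPart C‖ * (1 / 8) * ((1 + 2 * (1 / 8)) * (1 + 2 * (1 / 8))) := by
            gcongr
        _ = _ := by ring
    have hstab : ⁅C, B⁆ ∈ (stabilizer SL2Cᵐᵒᵖ x).unop :=
      mul_mem (mul_mem (mul_mem hC hB) (inv_mem hC)) (inv_mem hB)
    have hlt : ‖tracelessPart ⁅C, B⁆‖ < ‖tracelessPart C‖ := by
      linarith [norm_tracelessPart_commutatorElement_le C B, norm_pos_iff.2 hC₀]
    have hzero : tracelessPart ⁅C, B⁆ = 0 := by
      by_contra h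
      exact (hmin _ ⟨⟨hstab, hlt.le.trans hC'⟩, h⟩).not_gt hlt
    refine commutatorElement_eq_one_iff_commute.1 ((tracelessPart_eq_zero_iff.1 hzero).resolve_right
      fun h => ?_)
    have hentry : ‖((⁅C, B⁆ : SL2C) - 1 : Matrix (Fin 2) (Fin 2) ℂ) 0 0‖ = 2 := by
      rw [h]
      norm_num
    linarith [hentry.ge.trans (norm_entry_le _ 0 0), norm_commutatorElement_sub_one_le C B]
  obtain ⟨m, hm⟩ := hparallel A hA hA'
  obtain ⟨n, hn⟩ := hparallel B hB hB'
  have hm₀ : m ≠ 0 := fun h => hA₀ (by rw [hm, h, zero_smul])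
  exact ⟨n / m, by rw [hn, hm, smul_smul, div_mul_cancel₀ _ hm₀]⟩

theorem exists_tracelessPart_eq_smul_of_conj {x : X} {A B k : SL2C}
    (hA : x <• A = x) (hA₀ : tracelessPart A ≠ 0) (hA' : ‖tracelessPart (k⁻¹ * A * k)‖ ≤ 1 / 8)
    (hB : x <• B = x) (hB' : ‖tracelessPart (k⁻¹ * B * k)‖ ≤ 1 / 8) :
    ∃ m : ℂ, tracelessPart B = m • tracelessPart A := by
  have tracelessPart_eq (g : SL2C) :
      tracelessPart g = k * tracelessPart (k⁻¹ * g * k) * (k⁻¹ : SL2C) := by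
    simpa [mul_assoc] using tracelessPart_conj k⁻¹ (k⁻¹ * g * k)
  obtain ⟨m, hm⟩ := exists_tracelessPart_eq_smul (op_smul_conj hA k)
    (fun h => hA₀ (by rw [tracelessPart_eq, h, mul_zero, zero_mul])) hA' (op_smul_conj hB k) hB'
  exact ⟨m, by rw [tracelessPart_eq B, hm, mul_smul_comm, smul_mul_assoc, ← tracelessPart_eq]⟩

theorem exists_minimal_parallel {x : X} {A : SL2C} (hA : x <• A = x) (hA₀ : tracelessPart A ≠ 0) :
    ∃ g : SL2C, x <• g = x ∧ tracelessPart g ≠ 0 ∧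
      ∀ B : SL2C, x <• B = x → tracelessPart B ≠ 0 →
        (∃ m : ℂ, tracelessPart B = m • tracelessPart A) →
        ∃ m : ℂ, 1 ≤ ‖m‖ ∧ tracelessPart B = m • tracelessPart g := by
  have hfin : {g : SL2C | (x <• g = x ∧ ‖tracelessPart g‖ ≤ ‖tracelessPart A‖) ∧
      tracelessPart g ≠ 0 ∧ ∃ m : ℂ, tracelessPart g = m • tracelessPart A}.Finite :=
    (finite_setOf_norm_tracelessPart_le x _).subset fun g hg => hg.1
  obtain ⟨g, ⟨⟨hg, hgA⟩, hg₀, n, hn⟩, hmin⟩ := Set.exists_min_image _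
    (fun g => ‖tracelessPart g‖) hfin ⟨A, ⟨hA, le_rfl⟩, hA₀, 1, (one_smul _ _).symm⟩
  have hn₀ : n ≠ 0 := fun h => hg₀ (by rw [hn, h, zero_smul])
  refine ⟨g, hg, hg₀, fun B hB hB₀ ⟨m, hm⟩ => ?_⟩
  have hBg : tracelessPart B = (m / n) • tracelessPart g := by
    rw [hn, hm, smul_smul, div_mul_cancel₀ _ hn₀]
  have hle : ‖tracelessPart g‖ ≤ ‖tracelessPart B‖ := by
    by_cases hBA : ‖tracelessPart B‖ ≤ ‖tracelessPart A‖
    · exact hmin B ⟨⟨hB, hBA⟩, hB₀, m, hm⟩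
    · exact hgA.trans (not_le.1 hBA).le
  rw [hBg, norm_smul] at hle
  exact ⟨m / n, (le_mul_iff_one_le_left (norm_pos_iff.2 hg₀)).1 hle, hBg⟩

theorem exists_forall_norm_tracelessPart_conj_lt {x : X} {T : Type*} [TopologicalSpace T]
    {I : Set T} (hI : IsPreconnected I) (hIne : I.Nonempty) {k : T → SL2C} (hk : Continuous k)
    (hthin : ∀ s ∈ I, x <• k s ∉ thickPart X (1 / 8)) :
    ∃ g : SL2C, x <• g = x ∧ tracelessPart g ≠ 0 ∧
      ∀ s ∈ I, ‖tracelessPart ((k s)⁻¹ * g * k s)‖ < 1 / 8 := by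
  choose! γ hγ hγ₀ hγk using fun s hs => exists_of_op_smul_notMem_thickPart (hthin s hs)
  have hparallel : ∀ s ∈ I, ∀ t ∈ I, ∃ m : ℂ, tracelessPart (γ t) = m • tracelessPart (γ s) := by
    refine fun s hs t ht => hI.induction₂
      (fun s t => ∃ m : ℂ, tracelessPart (γ t) = m • tracelessPart (γ s))
      (fun s hs => ?_) ?_ ?_ hs ht
    · have hcont : Continuous fun t => ‖tracelessPart ((k t)⁻¹ * γ s * k t)‖ :=
        (continuous_tracelessPart.comp ((hk.inv.mul continuous_const).mul hk)).norm
      filter_upwards [mem_nhdsWithin_of_mem_nhds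
        (hcont.continuousAt.eventually_lt_const (hγk s hs)), self_mem_nhdsWithin] with t hst ht
      exact exists_tracelessPart_eq_smul_of_conj (hγ s hs) (hγ₀ s hs) hst.le (hγ t ht) (hγk t ht).le
    · rintro a b c - - - ⟨m, hm⟩ ⟨n, hn⟩
      exact ⟨n * m, by rw [hn, hm, smul_smul]⟩
    · rintro a b - hb ⟨m, hm⟩
      have hm₀ : m ≠ 0 := fun h => hγ₀ b hb (by rw [hm, h, zero_smul])
      exact ⟨m⁻¹, by rw [hm, smul_smul, inv_mul_cancel₀ hm₀, one_smul]⟩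
  obtain ⟨s₀, hs₀⟩ := hIne
  obtain ⟨g, hg, hg₀, hmin⟩ := exists_minimal_parallel (hγ s₀ hs₀) (hγ₀ s₀ hs₀)
  refine ⟨g, hg, hg₀, fun s hs => ?_⟩
  obtain ⟨m, hm, hmg⟩ := hmin (γ s) (hγ s hs) (hγ₀ s hs) (hparallel s₀ hs₀ s hs)
  refine lt_of_le_of_lt ?_ (hγk s hs)
  rw [tracelessPart_conj, tracelessPart_conj, hmg, mul_smul_comm, smul_mul_assoc, norm_smul]
  exact le_mul_of_one_le_left (norm_nonneg _) hm

end Nondivergence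

theorem norm_coeffs_le_of_norm_quadratic_le {E : Type*} [SeminormedAddCommGroup E]
    [NormedSpace ℝ E] {a b c : E} {M : ℝ}
    (h : ∀ r ∈ Set.Icc (1 : ℝ) 2, ‖a + r • b + r ^ 2 • c‖ ≤ M) :
    ‖a‖ ≤ 17 * M ∧ ‖b‖ ≤ 24 * M ∧ ‖c‖ ≤ 8 * M := by
  let p (r : ℝ) : E := a + r • b + r ^ 2 • c
  have norm_combination_le (r s t : ℝ) :
      ‖r • p 1 + s • p (3 / 2) + t • p 2‖ ≤ |r| * M + |s| * M + |t| * M := by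
    refine norm_add₃_le.trans ?_
    simp only [norm_smul, Real.norm_eq_abs]
    gcongr <;> exact h _ (by norm_num)
  refine ⟨?_, ?_, ?_⟩
  · convert norm_combination_le 6 (-8) 3 using 1
    · congr 1; module
    · norm_num; ring
  · convert norm_combination_le (-7) 12 (-5) using 1
    · congr 1; module
    · norm_num; ring
  · convert norm_combination_le 2 (-4) 2 using 1
    · congr 1; module
    · norm_num; ring

theorem tracelessPart_uMat_conj_zero_one (g : SL2C) (s : ℂ) :
    tracelessPart ((uMat s)⁻¹ * g * uMat s) 0 1 = g 0 1 + s * (g 0 0 - g 1 1) - s ^ 2 * g 1 0 := by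
  simp [tracelessPart, -cons_mul]
  ring

theorem norm_entries_le_of_norm_uMat_conj_lt {g : SL2C} {l : ℝ} (hl : 1 ≤ l)
    (h : ∀ s ∈ Set.Icc l (2 * l), ‖tracelessPart ((uMat s)⁻¹ * g * uMat s)‖ < 1 / 8) :
    ‖g 0 1‖ ≤ 17 / 8 ∧ ‖g 0 0 - g 1 1‖ * l ≤ 3 ∧ ‖g 1 0‖ * l ≤ 1 := by
  have quadratic_le (r : ℝ) (hr : r ∈ Set.Icc 1 2) :
      ‖g 0 1 + r • (l * (g 0 0 - g 1 1)) + (r ^ 2) • (-(l ^ 2 * g 1 0))‖ ≤ 1 / 8 := by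
    have hrl : r * l ∈ Set.Icc l (2 * l) := ⟨by nlinarith [hr.1], by nlinarith [hr.2]⟩
    refine le_trans (le_of_eq ?_) ((norm_entry_le _ 0 1).trans (h _ hrl).le)
    rw [tracelessPart_uMat_conj_zero_one, Complex.real_smul, Complex.real_smul]
    push_cast
    ring_nf
  have norm_pow_mul (n : ℕ) (z : ℂ) : ‖(l : ℂ) ^ n * z‖ = ‖z‖ * l ^ n := by
    rw [norm_mul, norm_pow, Complex.norm_of_nonneg (by linarith), mul_comm]
  obtain ⟨h₀₁, hsub, h₁₀⟩ := norm_coeffs_le_of_norm_quadratic_le quadratic_le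
  rw [norm_neg, norm_pow_mul] at h₁₀
  have hsub' := norm_pow_mul 1 (g 0 0 - g 1 1)
  rw [pow_one, pow_one] at hsub'
  exact ⟨h₀₁.trans (by norm_num), by linarith,
    by nlinarith [mul_nonneg (norm_nonneg (g 1 0)) (by linarith : 0 ≤ l)]⟩

theorem norm_tracelessPart_le (g : SL2C) :
    ‖tracelessPart g‖ ≤ ‖g 0 0 - g 1 1‖ / 2 + max ‖g 0 1‖ ‖g 1 0‖ := by
  have hentry₀ : tracelessPart g 0 0 = (g 0 0 - g 1 1) / 2 := by
    simp [tracelessPart, trace_fin_two]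
    ring
  have hentry₁ : tracelessPart g 1 1 = -((g 0 0 - g 1 1) / 2) := by
    simp [tracelessPart, trace_fin_two]
    ring
  have hentry₀₁ : tracelessPart g 0 1 = g 0 1 := by simp [tracelessPart]
  have hentry₁₀ : tracelessPart g 1 0 = g 1 0 := by simp [tracelessPart]
  rw [Matrix.linfty_opNorm_def, ← NNReal.coe_mk (‖g 0 0 - g 1 1‖ / 2 + _) (by positivity),
    NNReal.coe_le_coe]
  refine Finset.sup_le fun i _ => ?_
  rw [← NNReal.coe_le_coe, Fin.sum_univ_two]
  fin_cases i
  · simp [hentry₀, hentry₀₁]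
  · simp [hentry₁, hentry₁₀, add_comm]

theorem eq_uMat_or_eq_neg_uMat {g : SL2C} (h₁₀ : g 1 0 = 0) (hsub : g 0 0 - g 1 1 = 0) :
    g = uMat (g 0 1) ∨ g = -uMat (-g 0 1) := by
  have hdet := SL2C_det g
  rw [h₁₀, mul_zero, sub_zero, ← sub_eq_zero.1 hsub, mul_self_eq_one_iff] at hdet
  refine hdet.imp (fun h => ?_) fun h => ?_ <;>
    apply SL2C_ext <;> simp [h, h₁₀, ← sub_eq_zero.1 hsub]

theorem eventually_norm_mul_le_imp_eq_zero {E : Type*} [NormedAddCommGroup E] (z : E) (M : ℝ) :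
    ∀ᶠ l : ℝ in atTop, ‖z‖ * l ≤ M → z = 0 := by
  by_cases hz : z = 0
  · simp [hz]
  · filter_upwards [(tendsto_id.const_mul_atTop (norm_pos_iff.2 hz)).eventually_gt_atTop M]
      with l hl hl'
    exact absurd hl' hl.not_ge

section Nondivergence

variable {X : Type*} [TopologicalSpace X] [MulAction SL2Cᵐᵒᵖ X] [IsHomogeneousSL2Space X]

theorem exists_op_smul_uMat_mem_thickPart {x : X}
    (hx : ∀ ζ : ℂ, ζ ≠ 0 → x <• uMat ζ = x → 1 / 8 ≤ ‖ζ‖) :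
    ∃ L > 0, ∀ l ≥ L, ∃ s ∈ Set.Icc l (2 * l), x <• uMat (s : ℝ) ∈ thickPart X (1 / 8) := by
  have entries_eventually : ∀ᶠ l : ℝ in atTop, ∀ g ∈ {g : SL2C | x <• g = x ∧
      ‖tracelessPart g‖ ≤ 4}, (‖g 0 0 - g 1 1‖ * l ≤ 3 → g 0 0 - g 1 1 = 0) ∧
        (‖g 1 0‖ * l ≤ 1 → g 1 0 = 0) := by
    exact (eventually_all_finite (finite_setOf_norm_tracelessPart_le x 4)).2 fun g _ =>
      (eventually_norm_mul_le_imp_eq_zero _ 3).and (eventually_norm_mul_le_imp_eq_zero _ 1)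
  obtain ⟨L, hL⟩ := eventually_atTop.1 (entries_eventually.and (eventually_ge_atTop 1))
  refine ⟨max L 1, by positivity, fun l hl => ?_⟩
  obtain ⟨hentries, hl₁⟩ := hL l (le_of_max_le_left hl)
  by_contra! hthin
  obtain ⟨g, hg, hg₀, hconj⟩ := exists_forall_norm_tracelessPart_conj_lt isPreconnected_Icc
    ⟨l, le_rfl, by linarith⟩ (continuous_uMat.comp Complex.continuous_ofReal) hthin
  obtain ⟨h₀₁_le, hsub, h₁₀⟩ := norm_entries_le_of_norm_uMat_conj_lt hl₁ hconj
  have hnorm : ‖tracelessPart g‖ ≤ 4 := by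
    refine (norm_tracelessPart_le g).trans ?_
    have hsub_le := (le_mul_of_one_le_right (norm_nonneg _) hl₁).trans hsub
    have h₁₀_le := (le_mul_of_one_le_right (norm_nonneg _) hl₁).trans h₁₀
    linarith [max_le h₀₁_le (h₁₀_le.trans (by norm_num))]
  replace hsub := (hentries g ⟨hg, hnorm⟩).1 hsub
  replace h₁₀ := (hentries g ⟨hg, hnorm⟩).2 h₁₀
  have h₀₁ : ‖g 0 1‖ < 1 / 8 := by
    simpa [tracelessPart_uMat_conj_zero_one, hsub, h₁₀] using
      (norm_entry_le _ 0 1).trans_lt (hconj l ⟨le_rfl, by linarith⟩)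
  have hg_eq := eq_uMat_or_eq_neg_uMat h₁₀ hsub
  have h₀₁_ne : g 0 1 ≠ 0 := fun h =>
    hg₀ (tracelessPart_eq_zero_iff.2 (by rwa [h, neg_zero, uMat_zero] at hg_eq))
  rcases hg_eq with h | h
  · exact (hx _ h₀₁_ne (by rwa [← h])).not_gt h₀₁
  · refine (hx _ (neg_ne_zero.2 h₀₁_ne) ?_).not_gt (by rwa [norm_neg])
    rwa [← IsHomogeneousSL2Space.smul_neg, ← h]

end Nondivergence

/-! ### Minimal `U`-invariant sets -/

theorem uMat_mul_tri (t : ℂ) {α : ℝ} (hα : α ≠ 0) (w : ℂ) :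
    uMat t * tri α hα w = tri α hα w * uMat (t / (α : ℂ) ^ 2) := by
  have h : (α : ℂ) ≠ 0 := by exact_mod_cast hα
  apply SL2C_ext <;> simp
  field_simp
  ring

section Minimal

variable {X : Type*} [MulAction SL2Cᵐᵒᵖ X]

theorem AInvariant.mem_of_op_smul_mem {F : Set X} (hF : AInvariant F) {x : X} {δ : ℝ} (hδ : 0 < δ)
    (hx : x <• dMat δ hδ.ne' ∈ F) : x ∈ F := by
  have h := hF _ hx δ⁻¹ (inv_pos.2 hδ)
  rwa [← dMat_inv δ hδ.ne', ← mul_smul, ← op_mul, mul_inv_cancel, op_one, one_smul] at h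

theorem le_norm_of_op_smul_uMat_eq {x : X} {ε : ℝ} (hx : x ∈ thickPart X ε) {ζ : ℂ} (hζ : ζ ≠ 0)
    (h : x <• uMat ζ = x) : ε ≤ ‖ζ‖ := by
  rw [← norm_tracelessPart_uMat]
  refine hx _ h fun h₀ => hζ ?_
  rwa [← norm_eq_zero, norm_tracelessPart_uMat, norm_eq_zero] at h₀

variable [TopologicalSpace X]

/-- A closed `U`-invariant set meeting the thick part, and minimal among such sets. It need not be
a minimal set of the `U`-action: it may contain smaller closed `U`-invariant sets avoiding the
thick part. -/
def IsThickMinimal (Y : Set X) : Prop :=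
  Minimal (fun C : Set X => IsClosed C ∧ UInvariant C ∧ (C ∩ thickPart X (1 / 8)).Nonempty) Y

namespace IsThickMinimal

variable {Y F : Set X}

theorem isClosed (hY : IsThickMinimal Y) : IsClosed Y := hY.prop.1

theorem uInvariant (hY : IsThickMinimal Y) : UInvariant Y := hY.prop.2.1

theorem nonempty (hY : IsThickMinimal Y) : (Y ∩ thickPart X (1 / 8)).Nonempty := hY.prop.2.2

theorem subset (hY : IsThickMinimal Y) {y : X} (hy : y ∈ Y) (hyK : y ∈ thickPart X (1 / 8))
    (hF : IsClosed F) (hU : UInvariant F) (hyF : y ∈ F) : Y ⊆ F :=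
  (hY.le_of_le ⟨hY.isClosed.inter hF,
    fun x hx t => ⟨hY.uInvariant x hx.1 t, hU x hx.2 t⟩, y, ⟨hy, hyF⟩, hyK⟩
    Set.inter_subset_left).trans Set.inter_subset_right

end IsThickMinimal

variable [IsHomogeneousSL2Space X]

theorem exists_le_norm_mul_sq_of_op_smul_uMat_eq (x : X) :
    ∃ r > 0, ∀ (δ : ℝ) (hδ : 0 < δ) (ζ : ℂ), ζ ≠ 0 →
      x <• dMat δ hδ.ne' <• uMat ζ = x <• dMat δ hδ.ne' → r ≤ ‖ζ‖ * δ ^ 2 := by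
  have hu : Tendsto uMat (𝓝 0) (𝓝 1) := by simpa [uMat_zero] using continuous_uMat.tendsto 0
  obtain ⟨r, hr, hball⟩ := Metric.eventually_nhds_iff.1
    (hu.eventually (IsHomogeneousSL2Space.eventually_eq_one x))
  refine ⟨r, hr, fun δ hδ ζ hζ hstab => ?_⟩
  by_contra! hlt
  rw [← mul_smul, ← op_mul, dMat_mul_uMat, op_mul, mul_smul, smul_left_cancel_iff] at hstab
  have hnorm : dist ((δ : ℂ) ^ 2 * ζ) 0 < r := by
    simpa [abs_of_pos hδ, mul_comm] using hlt
  have hone := congr_arg (fun g : SL2C => g 0 1) (hball hnorm hstab)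
  simp [hδ.ne', hζ] at hone

theorem exists_op_smul_uMat_mem_thickPart_of_mem {x : X} (hx : x ∈ thickPart X (1 / 8)) :
    ∃ L > 0, ∀ l ≥ L, ∃ s ∈ Set.Icc l (2 * l), x <• uMat (s : ℝ) ∈ thickPart X (1 / 8) :=
  exists_op_smul_uMat_mem_thickPart fun _ => le_norm_of_op_smul_uMat_eq hx

theorem eventually_exists_op_smul_dMat_uMat_mem_thickPart (x : X) :
    ∃ δ₀ > 0, ∀ (δ : ℝ) (hδ : 0 < δ), δ < δ₀ → ∃ L > 0, ∀ l ≥ L, ∃ s ∈ Set.Icc l (2 * l),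
      x <• dMat δ hδ.ne' <• uMat (s : ℝ) ∈ thickPart X (1 / 8) := by
  obtain ⟨r, hr, hstab⟩ := exists_le_norm_mul_sq_of_op_smul_uMat_eq x
  refine ⟨min 1 r, by positivity, fun δ hδ hlt => exists_op_smul_uMat_mem_thickPart
    fun ζ hζ h => ?_⟩
  obtain ⟨hδ₁, hδr⟩ := lt_min_iff.1 hlt
  by_contra! hζ'
  nlinarith [hstab δ hδ ζ hζ h]

theorem UInvariant.exists_mem_thickPart {F : Set X} (hU : UInvariant F) (hA : AInvariant F)
    (hne : F.Nonempty) : (F ∩ thickPart X (1 / 8)).Nonempty := by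
  obtain ⟨x, hx⟩ := hne
  obtain ⟨δ₀, hδ₀, hreturn⟩ := eventually_exists_op_smul_dMat_uMat_mem_thickPart x
  obtain ⟨L, -, hL⟩ := hreturn (δ₀ / 2) (by positivity) (by linarith)
  obtain ⟨s, -, hs⟩ := hL L le_rfl
  exact ⟨_, hU _ (hA _ hx _ (by positivity)) s, hs⟩

namespace IsThickMinimal

variable {Y F : Set X}

/-- Upper triangular matrices normalise `U`, so they translate minimal sets. -/
theorem op_smul_tri_mem (hY : IsThickMinimal Y) (hF : IsClosed F) (hU : UInvariant F) {z : X}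
    (hz : z ∈ Y) (hzK : z ∈ thickPart X (1 / 8)) {α : ℝ} {hα : α ≠ 0} {w : ℂ}
    (hzF : z <• tri α hα w ∈ F) {y : X} (hy : y ∈ Y) : y <• tri α hα w ∈ F := by
  refine hY.subset hz hzK (F := (· <• tri α hα w) ⁻¹' F)
    (hF.preimage (continuous_const_smul _)) (fun y hy t => ?_) hzF hy
  have h := hU _ hy (t / α ^ 2)
  rw [← mul_smul, ← op_mul] at h
  rw [Set.mem_preimage, ← mul_smul, ← op_mul, uMat_mul_tri]
  exact_mod_cast h

end IsThickMinimal

variable [SecondCountableTopology X] [MeasurableSpace X] [BorelSpace X] (μ : Measure X)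
  [IsFiniteMeasure μ] [SMulInvariantMeasure SL2Cᵐᵒᵖ X μ] [NeZero μ]

include μ in
theorem nonempty_sInter_inter_thickPart {c : Set (Set X)} (hc : IsChain (· ⊆ ·) c)
    (hne : c.Nonempty) (hclosed : ∀ C ∈ c, IsClosed C)
    (hK : ∀ C ∈ c, (C ∩ thickPart X (1 / 8)).Nonempty) :
    (⋂₀ c ∩ thickPart X (1 / 8)).Nonempty := by
  have : Nonempty c := hne.to_subtype
  rw [Set.inter_comm, Set.sInter_eq_iInter]
  by_contra! hempty
  obtain ⟨C, hC⟩ := (isCompact_thickPart μ (by norm_num)).elim_directed_family_closed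
    (fun C : c => C.1) (fun C => hclosed _ C.2) hempty fun C D =>
      (hc.total C.2 D.2).elim (fun h => ⟨C, subset_rfl, h⟩) fun h => ⟨D, h, subset_rfl⟩
  exact (hK _ C.2).ne_empty (by rwa [Set.inter_comm])

include μ in
theorem exists_isThickMinimal_subset {F : Set X} (hF : IsClosed F) (hU : UInvariant F)
    (hK : (F ∩ thickPart X (1 / 8)).Nonempty) : ∃ Y ⊆ F, IsThickMinimal Y := by
  obtain ⟨Y, hYF, hY⟩ := zorn_superset_nonempty
    {C : Set X | IsClosed C ∧ UInvariant C ∧ (C ∩ thickPart X (1 / 8)).Nonempty}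
    (fun c hc hchain hne => ⟨⋂₀ c, ⟨isClosed_sInter fun C hC => (hc hC).1,
      fun x hx t C hC => (hc hC).2.1 x (hx C hC) t,
      nonempty_sInter_inter_thickPart μ hchain hne (fun C hC => (hc hC).1)
        fun C hC => (hc hC).2.2⟩, fun C hC => Set.sInter_subset_of_mem hC⟩) F ⟨hF, hU, hK⟩
  exact ⟨Y, hYF, hY⟩

include μ in
theorem exists_seq_tendsto_op_smul_dMat_uMat (x : X) {δ : ℕ → ℝ} (hδ : ∀ n, 0 < δ n)
    (hδ₀ : Tendsto δ atTop (𝓝 0)) :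
    ∃ w ∈ thickPart X (1 / 8), ∃ φ : ℕ → ℕ, StrictMono φ ∧ ∃ s : ℕ → ℝ,
      Tendsto (fun n => x <• dMat (δ (φ n)) (hδ _).ne' <• uMat (s n)) atTop (𝓝 w) := by
  obtain ⟨r, hr, hreturn⟩ := eventually_exists_op_smul_dMat_uMat_mem_thickPart x
  obtain ⟨N, hN⟩ := eventually_atTop.1 (hδ₀.eventually (gt_mem_nhds hr))
  have exists_return (n : ℕ) : ∃ s : ℝ,
      x <• dMat (δ (n + N)) (hδ _).ne' <• uMat s ∈ thickPart X (1 / 8) := by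
    obtain ⟨L, -, hL⟩ := hreturn _ (hδ (n + N)) (hN _ (by lia))
    obtain ⟨s, -, hs⟩ := hL L le_rfl
    exact ⟨s, hs⟩
  choose s hs using exists_return
  obtain ⟨w, hw, φ, hφ, hlim⟩ := (isCompact_thickPart μ (by norm_num)).tendsto_subseq hs
  exact ⟨w, hw, fun n => φ n + N, hφ.add_const N, s ∘ φ, hlim⟩

theorem uMat_mul_dMat_mul_uMat_mul_uMat (m : ℝ) {δ : ℝ} (hδ : δ ≠ 0) (s : ℝ) (ζ : ℂ) :
    uMat (m * Complex.I) * dMat δ hδ * uMat s * uMat ζ =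
      uMat ((m + ζ.im * δ ^ 2 : ℝ) * Complex.I) * uMat (((ζ.re + s) * δ ^ 2 : ℝ) : ℂ) *
        dMat δ hδ := by
  rw [mul_assoc, ← uMat_add, mul_assoc, dMat_mul_uMat, ← mul_assoc, ← uMat_add, ← uMat_add]
  congr 2
  apply Complex.ext <;> simp [← Complex.ofReal_pow, -mul_eq_mul_right_iff] <;> ring

include μ in
/-- Expanding an imaginary segment of unipotents by `A` yields in the limit a full horospherical
orbit. -/
theorem eq_univ_of_op_smul_uMat_mul_I_mem {F : Set X} (hF : IsClosed F) (hU : UInvariant F)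
    (hA : AInvariant F) {z : X} {p q : ℝ} (hpq : p < q)
    (hz : ∀ σ ∈ Set.Icc p q, z <• uMat (σ * Complex.I) ∈ F) : F = Set.univ := by
  let m := (p + q) / 2
  obtain ⟨δ, -, hδ, hδ₀⟩ := exists_seq_strictAnti_tendsto (0 : ℝ)
  obtain ⟨w, -, φ, hφ, s, hw⟩ :=
    exists_seq_tendsto_op_smul_dMat_uMat μ (z <• uMat (m * Complex.I)) hδ hδ₀
  refine eq_univ_of_op_smul_uMat_mem μ hF hA (z := w) fun ζ => ?_
  refine hF.mem_of_tendsto (tendsto_op_smul hw (tendsto_const_nhds (x := uMat ζ))) ?_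
  have tendsto_center : Tendsto (fun n => m + ζ.im * δ (φ n) ^ 2) atTop (𝓝 m) := by
    simpa using (((hδ₀.comp hφ.tendsto_atTop).pow 2).const_mul ζ.im).const_add m
  have hm : Set.Icc p q ∈ 𝓝 m := Icc_mem_nhds (by simp only [m]; linarith)
    (by simp only [m]; linarith)
  filter_upwards [tendsto_center hm] with n hn
  simp only [← mul_smul, ← op_mul]
  rw [uMat_mul_dMat_mul_uMat_mul_uMat]
  simp only [op_mul, mul_smul]
  exact hA _ (hU _ (hz _ hn) _) _ (hδ _)

end Minimal

/-! ### Polynomial divergence of `U`-orbits -/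

theorem exists_tendsto_smul_sq_smul {E F : Type*} [NormedAddCommGroup E] [NormedSpace ℝ E]
    [ProperSpace E] [NormedAddCommGroup F] [NormedSpace ℝ F] [ProperSpace F]
    {p : ℕ → E} {q : ℕ → F} (hp : Tendsto p atTop (𝓝 0)) (hq : Tendsto q atTop (𝓝 0))
    (hne : ∀ n, p n ≠ 0 ∨ q n ≠ 0) {c : ℝ} (hc : 0 < c) :
    ∃ (φ : ℕ → ℕ) (R : ℕ → ℝ) (p' : E) (q' : F), StrictMono φ ∧ Tendsto R atTop atTop ∧
      Tendsto (fun k => R k • p (φ k)) atTop (𝓝 p') ∧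
      Tendsto (fun k => R k ^ 2 • q (φ k)) atTop (𝓝 q') ∧ max ‖p'‖ √‖q'‖ = c := by
  let f : E × F → ℝ := fun x => max ‖x.1‖ √‖x.2‖
  have hf : Continuous f := by fun_prop
  have hf_pos : ∀ n, 0 < f (p n, q n) := fun n => (hne n).elim
    (fun h => lt_max_of_lt_left (norm_pos_iff.2 h))
    (fun h => lt_max_of_lt_right (Real.sqrt_pos.2 (norm_pos_iff.2 h)))
  have hf_lim : Tendsto (fun n => f (p n, q n)) atTop (𝓝[>] 0) := by
    refine tendsto_nhdsWithin_iff.2 ⟨?_, .of_forall hf_pos⟩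
    simpa [f, Function.comp_def] using (hf.tendsto 0).comp (hp.prodMk_nhds hq)
  let R : ℕ → ℝ := fun n => c * (f (p n, q n))⁻¹
  have hR_pos : ∀ n, 0 ≤ R n := fun n => mul_nonneg hc.le (inv_nonneg.2 (hf_pos n).le)
  have hR : Tendsto R atTop atTop := hf_lim.inv_tendsto_nhdsGT_zero.const_mul_atTop hc
  have hf_scale : ∀ n, f (R n • p n, R n ^ 2 • q n) = c := fun n => by
    have : f (R n • p n, R n ^ 2 • q n) = R n * f (p n, q n) := by
      simp only [f, norm_smul, norm_pow, Real.norm_of_nonneg (hR_pos n),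
        mul_max_of_nonneg _ _ (hR_pos n), Real.sqrt_mul (sq_nonneg (R n)),
        Real.sqrt_sq (hR_pos n)]
    rw [this, inv_mul_cancel_right₀ (hf_pos n).ne']
  have hmem : ∀ n, (R n • p n, R n ^ 2 • q n) ∈
      Metric.closedBall (0 : E) c ×ˢ Metric.closedBall (0 : F) (c ^ 2) := fun n => by
    rw [Set.mem_prod, mem_closedBall_zero_iff, mem_closedBall_zero_iff,
      ← Real.sqrt_le_left hc.le]
    exact max_le_iff.1 (hf_scale n).le
  obtain ⟨x, -, φ, hφ, hx⟩ := ((isCompact_closedBall (0 : E) c).prod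
    (isCompact_closedBall (0 : F) (c ^ 2))).tendsto_subseq hmem
  refine ⟨φ, R ∘ φ, x.1, x.2, hφ, hR.comp hφ.tendsto_atTop, hx.fst_nhds, hx.snd_nhds, ?_⟩
  have h := (hf.tendsto x).comp hx
  rw [show f ∘ (fun n => (R n • p n, R n ^ 2 • q n)) ∘ φ = fun _ => c from
    funext fun n => hf_scale (φ n)] at h
  exact tendsto_nhds_unique h tendsto_const_nhds

theorem exists_seq_mem_tendsto_div {T : Set ℝ} {L : ℝ}
    (hT : ∀ l ≥ L, ∃ s ∈ Set.Icc l (2 * l), s ∈ T) {R : ℕ → ℝ} (hR : Tendsto R atTop atTop)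
    {c : ℝ} (hc : 0 < c) :
    ∃ θ ∈ Set.Icc c (2 * c), ∃ (φ : ℕ → ℕ) (s : ℕ → ℝ), Tendsto φ atTop atTop ∧ (∀ k, s k ∈ T) ∧
      Tendsto (fun k => s k / R (φ k)) atTop (𝓝 θ) := by
  obtain ⟨N, hN⟩ := eventually_atTop.1
    ((hR.eventually_gt_atTop 0).and (hR.eventually_ge_atTop (L / c)))
  choose s hs hsT using fun k : ℕ =>
    hT (c * R (k + N)) (by rw [mul_comm]; exact (div_le_iff₀ hc).1 (hN _ (by omega)).2)
  have hmem : ∀ k, s k / R (k + N) ∈ Set.Icc c (2 * c) := fun k => by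
    have hRk := (hN (k + N) (by omega)).1
    rw [Set.mem_Icc, le_div_iff₀ hRk, div_le_iff₀ hRk, mul_assoc]
    exact hs k
  obtain ⟨θ, hθ, χ, hχ, hlim⟩ := isCompact_Icc.tendsto_subseq hmem
  exact ⟨θ, hθ, fun k => χ k + N, s ∘ χ, (tendsto_add_atTop_nat N).comp hχ.tendsto_atTop,
    fun k => hsT (χ k), hlim⟩

/-- The coefficient of `s` in `im (B * conj A)`, where `(A, B)` is the first row of
`(uMat s)⁻¹ * g`. -/
def shearLin (g : SL2C) : ℝ := -(g 0 1 * star (g 1 0) + g 1 1 * star (g 0 0)).im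

/-- The coefficient of `s ^ 2` in `im (B * conj A)`, where `(A, B)` is the first row of
`(uMat s)⁻¹ * g`. -/
def shearQuad (g : SL2C) : ℝ := (g 1 1 * star (g 1 0)).im

theorem continuous_shearLin : Continuous shearLin := by
  unfold shearLin
  have h := continuous_entry
  exact (Complex.continuous_im.comp
    (((h 0 1).mul (h 1 0).star).add ((h 1 1).mul (h 0 0).star))).neg

theorem continuous_shearQuad : Continuous shearQuad :=
  Complex.continuous_im.comp ((continuous_entry 1 1).mul (continuous_entry 1 0).star)

theorem shearLin_one : shearLin 1 = 0 := by simp [shearLin]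

theorem shearQuad_one : shearQuad 1 = 0 := by simp [shearQuad]

/-- The elements `g n` tend to `1`, and at the times `s n → ∞` the divergence of the `U`-orbits of
`x` and `x <• g n` converges: its `A`-part is governed by `κ`, and its part transverse to the
`AU`-orbit by `a` (linear in time) and `b` (quadratic in time). -/
structure ShearLimit (g : ℕ → SL2C) (s : ℕ → ℝ) (κ a b : ℝ) : Prop where
  tendsto_one : Tendsto g atTop (𝓝 1)
  tendsto_atTop : Tendsto s atTop atTop
  tendsto_entry : Tendsto (fun n => (s n : ℂ) * g n 1 0) atTop (𝓝 κ)
  tendsto_lin : Tendsto (fun n => s n * shearLin (g n)) atTop (𝓝 a)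
  tendsto_quad : Tendsto (fun n => s n ^ 2 * shearQuad (g n)) atTop (𝓝 b)

namespace ShearLimit

variable {g : ℕ → SL2C} {s R : ℕ → ℝ} {κ a b θ : ℝ}

theorem comp (h : ShearLimit g s κ a b) {φ : ℕ → ℕ} (hφ : Tendsto φ atTop atTop) :
    ShearLimit (g ∘ φ) (s ∘ φ) κ a b :=
  ⟨h.1.comp hφ, h.2.comp hφ, h.3.comp hφ, h.4.comp hφ, h.5.comp hφ⟩

theorem of_tendsto_div (h : ShearLimit g R κ a b) (hθ : 0 < θ)
    (hs : Tendsto (fun n => s n / R n) atTop (𝓝 θ)) :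
    ShearLimit g s (θ * κ) (θ * a) (θ ^ 2 * b) := by
  have hmul : ∀ᶠ n in atTop, s n / R n * R n = s n := by
    filter_upwards [h.tendsto_atTop.eventually_gt_atTop 0] with n hn
    rw [div_mul_cancel₀ _ hn.ne']
  refine ⟨h.tendsto_one, (hs.pos_mul_atTop hθ h.tendsto_atTop).congr' hmul, ?_,
    (hs.mul h.tendsto_lin).congr' ?_, ((hs.pow 2).mul h.tendsto_quad).congr' ?_⟩
  · rw [Complex.ofReal_mul]
    refine ((Complex.continuous_ofReal.tendsto _).comp hs |>.mul h.tendsto_entry).congr' ?_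
    filter_upwards [hmul] with n hn
    rw [Function.comp_apply, ← mul_assoc, ← Complex.ofReal_mul, hn]
  · filter_upwards [hmul] with n hn
    rw [← mul_assoc, hn]
  · filter_upwards [hmul] with n hn
    rw [← mul_assoc, ← mul_pow, hn]

end ShearLimit

/-- The limit of `s * g 1 0` is real because `s ^ 2 * im (g 1 1 * conj (g 1 0))` stays bounded. -/
theorem im_eq_zero_of_tendsto_shearQuad {g : ℕ → SL2C} {s : ℕ → ℝ} {κ : ℂ} {b : ℝ}
    (hg : Tendsto g atTop (𝓝 1)) (hs : Tendsto s atTop atTop)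
    (hκ : Tendsto (fun n => (s n : ℂ) * g n 1 0) atTop (𝓝 κ))
    (hb : Tendsto (fun n => s n ^ 2 * shearQuad (g n)) atTop (𝓝 b)) : κ.im = 0 := by
  have hd : Tendsto (fun n => g n 1 1) atTop (𝓝 1) := by simpa using tendsto_SL2C.1 hg 1 1
  have h₁ : Tendsto (fun n => s n * shearQuad (g n)) atTop (𝓝 (1 * star κ).im) := by
    refine ((Complex.continuous_im.tendsto _).comp (hd.mul hκ.star)).congr fun n => ?_
    simp [shearQuad]
    ring
  have h₂ : Tendsto (fun n => s n * shearQuad (g n)) atTop (𝓝 (0 * b)) := by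
    refine ((tendsto_inv_atTop_zero.comp hs).mul hb).congr' ?_
    filter_upwards [hs.eventually_gt_atTop 0] with n hn
    rw [Function.comp_apply, sq, mul_assoc, inv_mul_cancel_left₀ hn.ne']
  simpa using tendsto_nhds_unique h₁ h₂

theorem exists_shearLimit {g : ℕ → SL2C} (hg : Tendsto g atTop (𝓝 1))
    (hne : ∀ n, g n 1 0 ≠ 0 ∨ shearLin (g n) ≠ 0) {c : ℝ} (hc : 0 < c) :
    ∃ (φ : ℕ → ℕ) (R : ℕ → ℝ) (κ a b : ℝ), StrictMono φ ∧ ShearLimit (g ∘ φ) R κ a b ∧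
      (κ ≠ 0 ∨ a ≠ 0 ∨ b ≠ 0) ∧ |κ| ≤ c ∧ |a| ≤ c ∧ |b| ≤ c ^ 2 := by
  have h10 : Tendsto (fun n => g n 1 0) atTop (𝓝 0) := by simpa using tendsto_SL2C.1 hg 1 0
  have hlin : Tendsto (fun n => shearLin (g n)) atTop (𝓝 0) :=
    shearLin_one ▸ (continuous_shearLin.tendsto 1).comp hg
  have hquad : Tendsto (fun n => shearQuad (g n)) atTop (𝓝 0) :=
    shearQuad_one ▸ (continuous_shearQuad.tendsto 1).comp hg
  obtain ⟨φ, R, ⟨κ, a⟩, b, hφ, hR, hp, hb, hmax⟩ := exists_tendsto_smul_sq_smul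
    (p := fun n => (g n 1 0, shearLin (g n))) (h10.prodMk_nhds hlin) hquad
    (fun n => .inl fun h => (hne n).elim (· (Prod.mk_eq_zero.1 h).1) (· (Prod.mk_eq_zero.1 h).2)) hc
  have hgφ : Tendsto (g ∘ φ) atTop (𝓝 1) := hg.comp hφ.tendsto_atTop
  have hκ : Tendsto (fun n => (R n : ℂ) * (g ∘ φ) n 1 0) atTop (𝓝 κ) := by simpa using hp.fst_nhds
  have ha : Tendsto (fun n => R n * shearLin ((g ∘ φ) n)) atTop (𝓝 a) := by
    simpa using hp.snd_nhds
  obtain ⟨κ, rfl⟩ : ∃ r : ℝ, (r : ℂ) = κ :=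
    ⟨κ.re, Complex.ext rfl (im_eq_zero_of_tendsto_shearQuad hgφ hR hκ hb).symm⟩
  have hle := max_le_iff.1 hmax.le
  rw [Prod.norm_mk, max_le_iff, Complex.norm_real, Real.sqrt_le_left hc.le] at hle
  refine ⟨φ, R, κ, a, b, hφ, ⟨hgφ, hR, hκ, ha, hb⟩, ?_, hle.1.1, hle.1.2, hle.2⟩
  by_contra! h
  simp [h, hc.ne] at hmax

theorem add_sq_mul_ne_zero_or {a b θ θ' : ℝ} (hab : a ≠ 0 ∨ b ≠ 0) (hθ : θ ≠ 0) (hθ' : θ' ≠ 0)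
    (hne : θ ≠ θ') : θ * a + θ ^ 2 * b ≠ 0 ∨ θ' * a + θ' ^ 2 * b ≠ 0 := by
  by_contra! h
  have h₁ : a + θ * b = 0 := mul_left_cancel₀ hθ (by linear_combination h.1)
  have h₂ : a + θ' * b = 0 := mul_left_cancel₀ hθ' (by linear_combination h.2)
  have hb : b = 0 := mul_left_cancel₀ (sub_ne_zero.2 hne) (by linear_combination h₁ - h₂)
  exact hab.elim (· (by simpa [hb] using h₁)) (· hb)

theorem exists_shearLimit_mem {g : ℕ → SL2C} (hg : Tendsto g atTop (𝓝 1))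
    (hne : ∀ n, g n 1 0 ≠ 0 ∨ shearLin (g n) ≠ 0) {T : Set ℝ} {L : ℝ}
    (hT : ∀ l ≥ L, ∃ s ∈ Set.Icc l (2 * l), s ∈ T) {η : ℝ} (hη : 0 < η) :
    ∃ (φ : ℕ → ℕ) (s : ℕ → ℝ) (κ a b : ℝ), Tendsto φ atTop atTop ∧ (∀ k, s k ∈ T) ∧
      ShearLimit (g ∘ φ) s κ a b ∧ (κ ≠ 0 ∨ a + b ≠ 0) ∧ |κ| ≤ η ∧ |a + b| ≤ η := by
  obtain ⟨φ, R, κ, a, b, hφ, h, hne, hκ, ha, hb⟩ :=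
    exists_shearLimit hg hne (c := min 1 (η / 72)) (by positivity)
  have hsq : min 1 (η / 72) ^ 2 ≤ min 1 (η / 72) :=
    pow_le_of_le_one (by positivity) (min_le_left _ _) two_ne_zero
  have hmin := min_le_right 1 (η / 72)
  have key : ∀ c : ℝ, 1 ≤ c → c ≤ 4 → ∃ θ ∈ Set.Icc c (2 * c), (κ ≠ 0 ∨ θ * a + θ ^ 2 * b ≠ 0) →
      ∃ (φ : ℕ → ℕ) (s : ℕ → ℝ) (κ a b : ℝ), Tendsto φ atTop atTop ∧ (∀ k, s k ∈ T) ∧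
        ShearLimit (g ∘ φ) s κ a b ∧ (κ ≠ 0 ∨ a + b ≠ 0) ∧ |κ| ≤ η ∧ |a + b| ≤ η := by
    intro c hc₁ hc₄
    obtain ⟨θ, hθ, χ, s, hχ, hsT, hs⟩ :=
      exists_seq_mem_tendsto_div hT h.tendsto_atTop (zero_lt_one.trans_le hc₁)
    have hθ₀ : 0 < θ := by linarith [hθ.1]
    have hθ₈ : θ ≤ 8 := by linarith [hθ.2]
    refine ⟨θ, hθ, fun hne => ⟨φ ∘ χ, s, _, _, _, hφ.tendsto_atTop.comp hχ, hsT,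
      (h.comp hχ).of_tendsto_div hθ₀ hs, hne.imp_left (mul_ne_zero hθ₀.ne'), ?_, ?_⟩⟩
    · rw [abs_mul, abs_of_pos hθ₀]
      nlinarith [abs_nonneg κ]
    · have h₁ : |θ * a| ≤ 8 * |a| := by
        rw [abs_mul, abs_of_pos hθ₀]
        gcongr
      have h₂ : |θ ^ 2 * b| ≤ 8 ^ 2 * |b| := by
        rw [abs_mul, abs_of_pos (pow_pos hθ₀ 2)]
        gcongr
      linarith [abs_add_le (θ * a) (θ ^ 2 * b)]
  obtain ⟨θ, hθ, h₁⟩ := key 1 le_rfl (by norm_num)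
  obtain ⟨θ', hθ', h₄⟩ := key 4 (by norm_num) le_rfl
  rcases hne with hκ₀ | hab
  · exact h₁ (.inl hκ₀)
  · rcases add_sq_mul_ne_zero_or (θ := θ) (θ' := θ') hab (by linarith [hθ.1])
      (by linarith [hθ'.1]) (by linarith [hθ.2, hθ'.1]) with h | h
    exacts [h₁ (.inr h), h₄ (.inr h)]

theorem tendsto_tri {g : ℕ → SL2C} {α : ℝ} (hα : α ≠ 0) {w : ℂ}
    (h₀₀ : Tendsto (fun n => g n 0 0) atTop (𝓝 α)) (h₀₁ : Tendsto (fun n => g n 0 1) atTop (𝓝 w))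
    (h₁₀ : Tendsto (fun n => g n 1 0) atTop (𝓝 0)) : Tendsto g atTop (𝓝 (tri α hα w)) := by
  have hα' : (α : ℂ) ≠ 0 := Complex.ofReal_ne_zero.2 hα
  have h₁₁ : Tendsto (fun n => g n 1 1) atTop (𝓝 (α : ℂ)⁻¹) := by
    have h := ((h₀₁.mul h₁₀).const_add 1).div h₀₀ hα'
    simp only [mul_zero, add_zero, one_div] at h
    refine h.congr' ?_
    filter_upwards [h₀₀.eventually_ne hα'] with n hn
    rw [Pi.div_apply, div_eq_iff hn]
    linear_combination -SL2C_det (g n)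
  refine tendsto_SL2C.2 fun i j => ?_
  fin_cases i <;> fin_cases j <;> simpa

theorem add_neg_re_div_mul {A B : ℂ} (hA : A ≠ 0) :
    B - (B / A).re * A = (B * star A).im * Complex.I / star A := by
  have hA' : star A ≠ 0 := star_ne_zero.2 hA
  have him : (((B * star A).im : ℝ) : ℂ) = (B / A).im * (A * star A) := by
    have : B * star A = B / A * (Complex.normSq A : ℝ) := by
      rw [← Complex.mul_conj, starRingEnd_apply]
      field_simp
    rw [this, Complex.im_mul_ofReal, Complex.ofReal_mul, ← Complex.mul_conj, starRingEnd_apply]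
  rw [him, eq_div_iff hA']
  have hB : B = B / A * A := by field_simp
  linear_combination star A * (hB - A * Complex.re_add_im (B / A))

theorem ShearLimit.tendsto_im_mul_star {g : ℕ → SL2C} {s : ℕ → ℝ} {κ a b : ℝ}
    (h : ShearLimit g s κ a b) :
    Tendsto (fun n => ((g n 0 1 - s n * g n 1 1) * star (g n 0 0 - s n * g n 1 0)).im) atTop
      (𝓝 (a + b)) := by
  have h00 : Tendsto (fun n => g n 0 0) atTop (𝓝 1) := by simpa using tendsto_SL2C.1 h.1 0 0
  have h01 : Tendsto (fun n => g n 0 1) atTop (𝓝 0) := by simpa using tendsto_SL2C.1 h.1 0 1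
  have h₀ : Tendsto (fun n => (g n 0 1 * star (g n 0 0)).im) atTop (𝓝 0) := by
    have := (Complex.continuous_im.tendsto _).comp (h01.mul h00.star)
    rwa [zero_mul, Complex.zero_im] at this
  have := h₀.add (h.tendsto_lin.add h.tendsto_quad)
  rw [zero_add] at this
  refine this.congr fun n => ?_
  simp [shearLin, shearQuad]
  ring

theorem ShearLimit.exists_tendsto_conj {g : ℕ → SL2C} {s : ℕ → ℝ} {κ a b : ℝ}
    (h : ShearLimit g s κ a b) (hκ : 0 < 1 - κ) :
    ∃ t : ℕ → ℝ, Tendsto (fun n => (uMat (s n))⁻¹ * g n * uMat (t n)) atTop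
      (𝓝 (tri (1 - κ) hκ.ne' (((a + b) / (1 - κ) : ℝ) * Complex.I))) := by
  let A : ℕ → ℂ := fun n => g n 0 0 - s n * g n 1 0
  let B : ℕ → ℂ := fun n => g n 0 1 - s n * g n 1 1
  have h00 : Tendsto (fun n => g n 0 0) atTop (𝓝 1) := by simpa using tendsto_SL2C.1 h.1 0 0
  have h10 : Tendsto (fun n => g n 1 0) atTop (𝓝 0) := by simpa using tendsto_SL2C.1 h.1 1 0
  have hA : Tendsto A atTop (𝓝 ((1 - κ : ℝ) : ℂ)) := by simpa using h00.sub h.tendsto_entry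
  have hκ' : ((1 - κ : ℝ) : ℂ) ≠ 0 := Complex.ofReal_ne_zero.2 hκ.ne'
  have hw : Tendsto (fun n => (B n * star (A n)).im * Complex.I / star (A n)) atTop
      (𝓝 (((a + b) / (1 - κ) : ℝ) * Complex.I)) := by
    have h₁ : star ((1 - κ : ℝ) : ℂ) = (1 - κ : ℝ) := Complex.conj_ofReal _
    have hA' := hA.star
    rw [h₁] at hA'
    have := (((Complex.continuous_ofReal.tendsto _).comp h.tendsto_im_mul_star).mul_const
      Complex.I).div hA' hκ'
    rwa [mul_div_right_comm, ← Complex.ofReal_div] at this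
  have hrow : ∀ n (t : ℝ), ((uMat (s n))⁻¹ * g n * uMat t) 0 0 = A n ∧
      ((uMat (s n))⁻¹ * g n * uMat t) 0 1 = B n + t * A n ∧
      ((uMat (s n))⁻¹ * g n * uMat t) 1 0 = g n 1 0 := fun n t => by
    refine ⟨?_, ?_, ?_⟩ <;> simp [A, B, -cons_mul] <;> ring
  refine ⟨fun n => -(B n / A n).re, tendsto_tri hκ.ne' (hA.congr fun n => (hrow n _).1.symm)
    (hw.congr' ?_) (h10.congr fun n => (hrow n _).2.2.symm)⟩
  filter_upwards [hA.eventually_ne hκ'] with n hn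
  rw [← add_neg_re_div_mul hn, (hrow n _).2.1]
  push_cast
  ring

/-! ### Closed subsets of the line invariant under small affine maps -/

section Affine

variable {S : Set ℝ} {f : ℝ → ℝ} {τ L ε : ℝ}

theorem exists_dist_lt_of_forall_Icc_lt_map (hS : IsClosed S) (hτ : τ ∈ S)
    (hf : ∀ σ ∈ S ∩ Set.Icc τ (τ + L), f σ ∈ S ∧ σ < f σ ∧ f σ < σ + ε) {x : ℝ}
    (hx : x ∈ Set.Icc τ (τ + L)) : ∃ y ∈ S, dist x y < ε := by
  obtain ⟨m, ⟨hmS, hτm, hmx⟩, hmax⟩ := (isCompact_Icc (a := τ) (b := x)).inter_left hS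
    |>.exists_isMaxOn ⟨τ, hτ, le_rfl, hx.1⟩ continuousOn_id
  obtain ⟨hfS, hlt, hltε⟩ := hf m ⟨hmS, hτm, hmx.trans hx.2⟩
  refine ⟨f m, hfS, ?_⟩
  have hxf : x < f m := by
    by_contra! hle
    exact hlt.not_ge (hmax ⟨hfS, hτm.trans hlt.le, hle⟩)
  rw [dist_comm, Real.dist_eq, abs_of_pos (sub_pos.2 hxf)]
  linarith

theorem exists_dist_lt_of_forall_Icc_map_lt (hS : IsClosed S) (hτ : τ ∈ S)
    (hf : ∀ σ ∈ S ∩ Set.Icc (τ - L) τ, f σ ∈ S ∧ f σ < σ ∧ σ - ε < f σ) {x : ℝ}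
    (hx : x ∈ Set.Icc (τ - L) τ) : ∃ y ∈ S, dist x y < ε := by
  obtain ⟨y, hy, hxy⟩ := exists_dist_lt_of_forall_Icc_lt_map (S := -S) (f := fun σ => -f (-σ))
    (τ := -τ) (L := L) (ε := ε) (x := -x) hS.neg (by simpa using hτ) (fun σ hσ => by
      obtain ⟨hfS, hlt, hltε⟩ := hf (-σ) ⟨hσ.1, by linarith [hσ.2.2], by linarith [hσ.2.1]⟩
      exact ⟨by simpa using hfS, by linarith, by linarith⟩)
    ⟨by linarith [hx.2], by linarith [hx.1]⟩
  exact ⟨-y, hy, by rwa [← dist_neg_neg, neg_neg]⟩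

theorem exists_dist_lt_of_displacement_ne_zero (hS : IsClosed S) (hτ : τ ∈ S) (hL : 0 ≤ L)
    {d : ℝ → ℝ} (hd : Continuous d) (hdS : ∀ σ ∈ S, σ + d σ ∈ S)
    (hne : ∀ σ ∈ Metric.closedBall τ L, d σ ≠ 0) (hε : ∀ σ ∈ Metric.closedBall τ L, |d σ| < ε) :
    ∃ p ∈ ({τ - L, τ} : Set ℝ), ∀ x ∈ Set.Icc p (p + L), ∃ y ∈ S, dist x y < ε := by
  have hsub : Set.Icc (τ - L) τ ⊆ Metric.closedBall τ L ∧
      Set.Icc τ (τ + L) ⊆ Metric.closedBall τ L := by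
    rw [Real.closedBall_eq_Icc]
    exact ⟨Set.Icc_subset_Icc_right (by linarith), Set.Icc_subset_Icc_left (by linarith)⟩
  have hsign : (∀ σ ∈ Metric.closedBall τ L, 0 < d σ) ∨ ∀ σ ∈ Metric.closedBall τ L, d σ < 0 := by
    have hconn := (convex_closedBall τ L).isPreconnected
    by_contra! h
    obtain ⟨⟨σ, hσ, hσd⟩, ⟨σ', hσ', hσd'⟩⟩ := h
    obtain ⟨ρ, hρ, hρd⟩ := hconn.intermediate_value hσ hσ' hd.continuousOn ⟨hσd, hσd'⟩
    exact hne ρ hρ hρd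
  rcases hsign with hpos | hneg
  · refine ⟨τ, .inr rfl, fun x hx => ?_⟩
    refine exists_dist_lt_of_forall_Icc_lt_map (f := fun σ => σ + d σ) hS hτ (fun σ hσ => ?_) hx
    have hσL := hsub.2 hσ.2
    exact ⟨hdS σ hσ.1, by linarith [hpos σ hσL], by linarith [(abs_lt.1 (hε σ hσL)).2]⟩
  · refine ⟨τ - L, .inl rfl, fun x hx => ?_⟩
    rw [sub_add_cancel] at hx
    refine exists_dist_lt_of_forall_Icc_map_lt (f := fun σ => σ + d σ) hS hτ (fun σ hσ => ?_) hx
    have hσL := hsub.1 hσ.2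
    exact ⟨hdS σ hσ.1, by linarith [hneg σ hσL], by linarith [(abs_lt.1 (hε σ hσL)).1]⟩

theorem forall_mul_add_ne_zero_or {m c r σ₀ : ℝ} (hmc : m ≠ 0 ∨ c ≠ 0) (hr : 2 * r < |σ₀|) :
    (∀ σ ∈ Metric.closedBall 0 r, m * σ + c ≠ 0) ∨
      ∀ σ ∈ Metric.closedBall σ₀ r, m * σ + c ≠ 0 := by
  by_contra! h
  obtain ⟨⟨σ, hσ, hσ0⟩, σ', hσ', hσ'0⟩ := h
  rw [Metric.mem_closedBall, Real.dist_eq, sub_zero] at hσ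
  rw [Metric.mem_closedBall, dist_comm, Real.dist_eq] at hσ'
  have hne : σ' - σ ≠ 0 := fun h => by
    have : |σ₀| ≤ |σ₀ - σ'| + |σ| := by simpa [← sub_eq_zero.1 h] using abs_add_le (σ₀ - σ') σ
    linarith
  have hm : m = 0 := (mul_eq_zero.1 (by linarith : m * (σ' - σ) = 0)).resolve_right hne
  rw [hm, zero_mul, zero_add] at hσ0
  exact hmc.elim (· hm) (· hσ0)

theorem exists_Icc_subset_of_forall_exists_dist_lt (hS : IsClosed S) {P : Set ℝ} (hP : P.Finite)
    (h : ∀ ε > 0, ∃ p ∈ P, ∀ x ∈ Set.Icc p (p + L), ∃ y ∈ S, dist x y < ε) :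
    ∃ p ∈ P, Set.Icc p (p + L) ⊆ S := by
  suffices ∃ p ∈ P, ∀ ε > 0, ∀ x ∈ Set.Icc p (p + L), ∃ y ∈ S, dist x y < ε by
    obtain ⟨p, hp, hpS⟩ := this
    exact ⟨p, hp, fun x hx => hS.closure_eq ▸ Metric.mem_closure_iff.2 fun ε hε => hpS ε hε x hx⟩
  by_contra! hgap
  choose! ε hε_pos x hx hxS using hgap
  obtain ⟨q, hq, -⟩ := h 1 one_pos
  obtain ⟨p, hp, hmin⟩ := hP.exists_minimalFor ε P ⟨q, hq⟩
  obtain ⟨p', hp', hpS⟩ := h (ε p) (hε_pos p hp)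
  obtain ⟨y, hy, hxy⟩ := hpS _ (hx p' hp')
  have hle : ε p ≤ ε p' := (le_total (ε p) (ε p')).elim id (hmin hp')
  exact hxy.not_ge (hle.trans (hxS p' hp' y hy))

theorem exists_Icc_subset_of_affine_maps (hS : IsClosed S) (h0 : 0 ∈ S) {σ₀ : ℝ} (hσ₀ : σ₀ ≠ 0)
    (hσ₀S : σ₀ ∈ S) (hf : ∀ η > 0, ∃ m c : ℝ, (m ≠ 0 ∨ c ≠ 0) ∧ |m| ≤ η ∧ |c| ≤ η ∧
      ∀ σ ∈ S, σ + (m * σ + c) ∈ S) : ∃ p q, p < q ∧ Set.Icc p q ⊆ S := by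
  have hσ₀_pos := abs_pos.2 hσ₀
  set L := |σ₀| / 3 with hL
  let P : Set ℝ := {0 - L, 0} ∪ {σ₀ - L, σ₀}
  have hdense : ∀ ε > 0, ∃ p ∈ P, ∀ x ∈ Set.Icc p (p + L), ∃ y ∈ S, dist x y < ε := by
    intro ε hε
    obtain ⟨m, c, hmc, hm, hc, hinv⟩ := hf (ε / (2 * (2 * |σ₀| + 1))) (by positivity)
    have hsmall : ∀ σ, |σ| ≤ 2 * |σ₀| → |m * σ + c| < ε := fun σ hσ => calc
      |m * σ + c| ≤ |m| * |σ| + |c| := by rw [← abs_mul]; exact abs_add_le _ _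
      _ ≤ ε / (2 * (2 * |σ₀| + 1)) * (2 * |σ₀|) + ε / (2 * (2 * |σ₀| + 1)) := by gcongr
      _ = ε / 2 := by field_simp
      _ < ε := half_lt_self hε
    have hball : ∀ τ, |τ| ≤ |σ₀| → ∀ σ ∈ Metric.closedBall τ L, |m * σ + c| < ε := by
      refine fun τ hτ σ hσ => hsmall σ ?_
      have := abs_add_le (σ - τ) τ
      rw [sub_add_cancel] at this
      rw [Metric.mem_closedBall, Real.dist_eq] at hσ
      linarith
    have hcont : Continuous fun σ => m * σ + c := by fun_prop
    rcases forall_mul_add_ne_zero_or hmc (by linarith : 2 * L < |σ₀|) with hne | hne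
    · obtain ⟨p, hp, h⟩ := exists_dist_lt_of_displacement_ne_zero hS h0 (by positivity) hcont hinv
        hne (hball 0 (by simp))
      exact ⟨p, .inl hp, h⟩
    · obtain ⟨p, hp, h⟩ := exists_dist_lt_of_displacement_ne_zero hS hσ₀S (by positivity) hcont hinv
        hne (hball σ₀ le_rfl)
      exact ⟨p, .inr hp, h⟩
  obtain ⟨p, -, hp⟩ := exists_Icc_subset_of_forall_exists_dist_lt hS P.toFinite hdense
  exact ⟨p, p + L, by linarith, hp⟩

end Affine

/-! ### Minimal sets containing a non-periodic point -/

theorem eq_tri_of_shearLin_eq_zero {g : SL2C} (h₁₀ : g 1 0 = 0) (hlin : shearLin g = 0)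
    (hre : 0 < (g 0 0).re) : g = tri (g 0 0).re hre.ne' (g 0 1) := by
  have hdet : g 0 0 * g 1 1 = 1 := by simpa [h₁₀] using SL2C_det g
  have hlin' : (g 1 1 * star (g 0 0)).im = 0 := neg_eq_zero.1 (by simpa only [shearLin,
    h₁₀, star_zero, mul_zero, zero_add] using hlin)
  have hstar : star (g 0 0) = ((g 1 1 * star (g 0 0)).re : ℝ) * g 0 0 := by
    have : (((g 1 1 * star (g 0 0)).re : ℝ) : ℂ) = g 1 1 * star (g 0 0) :=
      Complex.ext (by simp only [Complex.ofReal_re]) (by rw [hlin', Complex.ofReal_im])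
    rw [this]
    linear_combination -star (g 0 0) * hdet
  have him : (g 0 0).im = 0 := by
    set ρ := (g 1 1 * star (g 0 0)).re
    have hre' : (g 0 0).re = ρ * (g 0 0).re := by simpa using congrArg Complex.re hstar
    have him' : -(g 0 0).im = ρ * (g 0 0).im := by simpa using congrArg Complex.im hstar
    have hρ : ρ = 1 := mul_right_cancel₀ hre.ne' (hre'.symm.trans (one_mul _).symm)
    rw [hρ] at him'
    linarith
  have h₀₀ : (((g 0 0).re : ℝ) : ℂ) = g 0 0 := Complex.ext (by simp) (by simp [him])
  apply SL2C_ext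
  · simp [h₀₀]
  · simp
  · simp [h₁₀]
  · simp [h₀₀, eq_inv_of_mul_eq_one_right hdet]

theorem tri_mul_uMat_neg_re_div {α : ℝ} (hα : α ≠ 0) (w : ℂ) :
    tri α hα w * uMat ((-(w.re / α) : ℝ) : ℂ) = tri α hα (w.im * Complex.I) := by
  have hα' : (α : ℂ) ≠ 0 := Complex.ofReal_ne_zero.2 hα
  apply SL2C_ext
  · simp
  · simp only [coe_tri, coe_uMat, Matrix.SpecialLinearGroup.coe_mul]
    simp only [Matrix.mul_apply, Fin.sum_univ_two]
    simp [mul_div_cancel₀ _ hα']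
    linear_combination -w.re_add_im
  · simp
  · simp

theorem tri_eq_uMat_mul_dMat {α : ℝ} (hα : α ≠ 0) (w : ℂ) :
    tri α hα w = uMat (α * w) * dMat α hα := by
  have hα' : (α : ℂ) ≠ 0 := Complex.ofReal_ne_zero.2 hα
  apply SL2C_ext <;> simp [dMat]
  field_simp

section Nonperiodic

variable {X : Type*} [MulAction SL2Cᵐᵒᵖ X]

theorem op_smul_uMat_op_smul_uMat_neg (x : X) (ζ : ℂ) : x <• uMat ζ <• uMat (-ζ) = x := by
  rw [← mul_smul, ← op_mul, uMat_neg, mul_inv_cancel, op_one, one_smul]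

theorem exists_op_smul_uMat_eq_self {x y : X} {T : ℕ → ℝ} (hT : Tendsto T atTop atTop)
    (h : ∀ᶠ n in atTop, y <• uMat (T n) = x) : ∃ t : ℝ, t ≠ 0 ∧ y <• uMat t = y := by
  obtain ⟨N, hN⟩ := h.exists
  obtain ⟨n, hn, hnN⟩ := (h.and (hT.eventually_gt_atTop (T N))).exists
  refine ⟨T n - T N, sub_ne_zero.2 hnN.ne', ?_⟩
  rw [Complex.ofReal_sub, sub_eq_add_neg, uMat_add, op_mul, mul_smul, hn, ← hN,
    op_smul_uMat_op_smul_uMat_neg]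

variable [TopologicalSpace X] [IsHomogeneousSL2Space X]
  {Y F : Set X}

theorem IsThickMinimal.op_smul_tri_mem_of_shearLin_eq_zero (hY : IsThickMinimal Y) {x : X}
    (hx : x ∈ Y ∩ thickPart X (1 / 8)) {g : SL2C} (hg : x <• g ∈ Y) (h₁₀ : g 1 0 = 0)
    (hlin : shearLin g = 0) (hre : 0 < (g 0 0).re) {y : X} (hy : y ∈ Y) :
    y <• tri (g 0 0).re hre.ne' ((g 0 1).im * Complex.I) ∈ Y := by
  refine hY.op_smul_tri_mem hY.isClosed hY.uInvariant hx.1 hx.2 ?_ hy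
  rw [← tri_mul_uMat_neg_re_div, ← eq_tri_of_shearLin_eq_zero h₁₀ hlin hre, op_mul, mul_smul]
  exact hY.uInvariant _ hg _

variable [SecondCountableTopology X] [MeasurableSpace X] [BorelSpace X] (μ : Measure X)
  [IsFiniteMeasure μ] [SMulInvariantMeasure SL2Cᵐᵒᵖ X μ] [NeZero μ]

include μ in
theorem IsThickMinimal.op_smul_tri_mem_of_shearLimit (hY : IsThickMinimal Y) (hF : IsClosed F)
    (hU : UInvariant F) {x : X} (hx : x ∈ Y) {g : ℕ → SL2C} {s : ℕ → ℝ} {κ a b : ℝ}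
    (hs : ∀ n, x <• uMat (s n) ∈ thickPart X (1 / 8)) (h : ShearLimit g s κ a b)
    (hg : ∀ n, x <• g n ∈ F) (hκ : 0 < 1 - κ) {y : X} (hy : y ∈ Y) :
    y <• tri (1 - κ) hκ.ne' (((a + b) / (1 - κ) : ℝ) * Complex.I) ∈ F := by
  obtain ⟨t, ht⟩ := h.exists_tendsto_conj hκ
  obtain ⟨z, hzK, φ, hφ, hz⟩ := (isCompact_thickPart μ (by norm_num)).tendsto_subseq hs
  have hzY : z ∈ Y := hY.isClosed.mem_of_tendsto hz (.of_forall fun n => hY.uInvariant _ hx _)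
  refine hY.op_smul_tri_mem hF hU hzY hzK ?_ hy
  refine hF.mem_of_tendsto (tendsto_op_smul hz (ht.comp hφ.tendsto_atTop)) (.of_forall fun n => ?_)
  have := hU _ (hg (φ n)) (t (φ n))
  simpa [← mul_smul, ← op_mul, mul_assoc] using this

include μ in
theorem IsThickMinimal.exists_seq_ne_uMat (hY : IsThickMinimal Y) {y : X} (hy : y ∈ Y)
    (hyK : y ∈ thickPart X (1 / 8)) (hper : ∀ t : ℝ, t ≠ 0 → y <• uMat t ≠ y) :
    ∃ x ∈ Y ∩ thickPart X (1 / 8), ∃ w : ℕ → SL2C, Tendsto w atTop (𝓝 1) ∧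
      (∀ n, ∀ t : ℝ, w n ≠ uMat t) ∧ ∀ n, x <• w n ∈ Y := by
  obtain ⟨L, hL, hreturn⟩ := exists_op_smul_uMat_mem_thickPart_of_mem hyK
  choose t ht htK using fun n : ℕ => hreturn (L + n) (by simp)
  have htt : Tendsto t atTop atTop :=
    tendsto_atTop_mono (fun n => (by linarith [(ht n).1] : (n : ℝ) ≤ t n))
      tendsto_natCast_atTop_atTop
  obtain ⟨x, hxK, φ, hφ, hlim⟩ := (isCompact_thickPart μ (by norm_num)).tendsto_subseq htK
  have hxY : x ∈ Y := hY.isClosed.mem_of_tendsto hlim (.of_forall fun n => hY.uInvariant _ hy _)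
  obtain ⟨k, hk, hkx⟩ :=
    exists_seq_tendsto_one_op_smul_eq (IsHomogeneousSL2Space.isOpenMap_orbit x) hlim
  have hfreq : ∃ᶠ n in atTop, ∀ r : ℝ, k n ≠ uMat r := by
    intro hcon
    let T : ℕ → ℝ := fun n => t (φ n) - (k n 0 1).re
    have hT : Tendsto T atTop atTop := by
      have hre := (Complex.continuous_re.tendsto _).comp (tendsto_SL2C.1 hk 0 1)
      simpa [T, Function.comp_def, sub_eq_add_neg] using
        (htt.comp hφ.tendsto_atTop).atTop_add hre.neg
    have hTx : ∀ᶠ n in atTop, y <• uMat (T n) = x := by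
      filter_upwards [hcon] with n hn
      push Not at hn
      obtain ⟨r, hr⟩ := hn
      have hTn : ((T n : ℝ) : ℂ) = t (φ n) + -r := by simp [T, hr, sub_eq_add_neg]
      rw [hTn, uMat_add, op_mul, mul_smul, show y <• uMat (t (φ n)) = _ from (hkx n).symm,
        hr, op_smul_uMat_op_smul_uMat_neg]
    obtain ⟨r, hr₀, hr⟩ := exists_op_smul_uMat_eq_self hT hTx
    exact hper r hr₀ hr
  obtain ⟨χ, hχ, hχU⟩ := extraction_of_frequently_atTop hfreq
  exact ⟨x, ⟨hxY, hxK⟩, k ∘ χ, hk.comp hχ.tendsto_atTop, hχU, fun n =>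
    (hkx (χ n)).symm ▸ hY.uInvariant _ hy _⟩

include μ in
theorem IsThickMinimal.exists_op_smul_tri_mem (hY : IsThickMinimal Y) {y : X} (hy : y ∈ Y)
    (hyK : y ∈ thickPart X (1 / 8)) (hper : ∀ t : ℝ, t ≠ 0 → y <• uMat t ≠ y) {η : ℝ}
    (hη : 0 < η) (hη' : η ≤ 1 / 2) :
    ∃ (α β : ℝ) (hα : 0 < α), (α ≠ 1 ∨ β ≠ 0) ∧ |α - 1| ≤ η ∧ |β| ≤ η ∧
      ∀ y ∈ Y, y <• tri α hα.ne' (β * Complex.I) ∈ Y := by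
  obtain ⟨x, hx, w, hw, hwU, hwY⟩ := hY.exists_seq_ne_uMat μ hy hyK hper
  have h00 : ∀ᶠ n in atTop, |(w n 0 0).re - 1| < η := by
    have := (Complex.continuous_re.tendsto _).comp (tendsto_SL2C.1 hw 0 0)
    simpa [Real.dist_eq] using Metric.tendsto_nhds.1 this η hη
  have h01 : ∀ᶠ n in atTop, |(w n 0 1).im| < η := by
    have := (Complex.continuous_im.tendsto _).comp (tendsto_SL2C.1 hw 0 1)
    simpa [Real.dist_eq] using Metric.tendsto_nhds.1 this η hη
  by_cases hcase : ∃ᶠ n in atTop, w n 1 0 = 0 ∧ shearLin (w n) = 0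
  · obtain ⟨n, ⟨h₁₀, hlin⟩, hα, hβ⟩ := (hcase.and_eventually (h00.and h01)).exists
    have hre : 0 < (w n 0 0).re := by linarith [(abs_lt.1 hα).1]
    refine ⟨_, _, hre, ?_, hα.le, hβ.le,
      fun y => hY.op_smul_tri_mem_of_shearLin_eq_zero hx (hwY n) h₁₀ hlin hre⟩
    by_contra! h
    refine hwU n (w n 0 1).re ((eq_tri_of_shearLin_eq_zero h₁₀ hlin hre).trans ?_)
    have : (((w n 0 1).re : ℝ) : ℂ) = w n 0 1 := Complex.ext (by simp) (by simp [h.2])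
    apply SL2C_ext <;> simp [h.1, this]
  · obtain ⟨N, hN⟩ := eventually_atTop.1 (not_frequently.1 hcase)
    obtain ⟨L, -, hreturn⟩ := exists_op_smul_uMat_mem_thickPart_of_mem hx.2
    obtain ⟨φ, s, κ, a, b, -, hs, h, hne, hκ, hab⟩ :=
      exists_shearLimit_mem (g := fun n => w (n + N)) (hw.comp (tendsto_add_atTop_nat N))
        (fun n => not_and_or.1 (hN _ (by lia))) hreturn (η := η / 4) (by positivity)
    have hκ₀ : 0 < 1 - κ := by linarith [(abs_le.1 hκ).2]
    refine ⟨1 - κ, (a + b) / (1 - κ), hκ₀, ?_, ?_, ?_, fun y hy =>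
      hY.op_smul_tri_mem_of_shearLimit μ hY.isClosed hY.uInvariant hx.1 hs h (fun n => hwY _)
        hκ₀ hy⟩
    · simpa [hκ₀.ne'] using hne
    · rw [sub_sub_cancel_left, abs_neg]
      linarith
    · rw [abs_div, abs_of_pos hκ₀, div_le_iff₀ hκ₀]
      nlinarith [(abs_le.1 hκ).2]

include μ in
theorem IsThickMinimal.eq_univ_of_op_smul_uMat_mem (hY : IsThickMinimal Y) (hF : IsClosed F)
    (hU : UInvariant F) (hA : AInvariant F) (hYF : Y ⊆ F) {y : X} (hy : y ∈ Y)
    (hyK : y ∈ thickPart X (1 / 8)) (hper : ∀ t : ℝ, t ≠ 0 → y <• uMat t ≠ y) {σ₀ : ℝ}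
    (hσ₀ : σ₀ ≠ 0) (hYσ₀ : ∀ y ∈ Y, y <• uMat (σ₀ * Complex.I) ∈ F) : F = Set.univ := by
  let S : Set ℝ := {σ | ∀ y ∈ Y, y <• uMat (σ * Complex.I) ∈ F}
  have hS : IsClosed S := by
    simp only [S, Set.ofPred_forall]
    exact isClosed_biInter fun y _ => hF.preimage <| (continuous_op.comp <|
      continuous_uMat.comp (by fun_prop)).smul continuous_const
  obtain ⟨p, q, hpq, hI⟩ := exists_Icc_subset_of_affine_maps hS
    (fun y hy => by simpa [uMat_zero] using hYF hy) hσ₀ hYσ₀ fun η hη => by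
    obtain ⟨α, β, hα, hne, hα', hβ, hαβ⟩ :=
      hY.exists_op_smul_tri_mem μ hy hyK hper (η := min (1 / 2) (η / 3)) (by positivity)
        (min_le_left _ _)
    have hα₂ : |α - 1| ≤ 1 / 2 := hα'.trans (min_le_left _ _)
    have hα₃ : |α - 1| ≤ η / 3 := hα'.trans (min_le_right _ _)
    have hβ₃ : |β| ≤ η / 3 := hβ.trans (min_le_right _ _)
    rw [abs_le] at hα₂
    refine ⟨α ^ 2 - 1, α * β, ?_, ?_, ?_, fun σ hσ y hy => ?_⟩
    · refine hne.imp (fun h h' => h ?_) (mul_ne_zero hα.ne')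
      exact (pow_eq_one_iff_of_nonneg hα.le two_ne_zero).1 (sub_eq_zero.1 h')
    · rw [show α ^ 2 - 1 = (α - 1) * (α + 1) by ring, abs_mul, abs_of_pos (by linarith : 0 < α + 1)]
      nlinarith [abs_nonneg (α - 1)]
    · rw [abs_mul, abs_of_pos hα]
      nlinarith [abs_nonneg β]
    · refine hA.mem_of_op_smul_mem hα ?_
      have h := hσ _ (hαβ y hy)
      rw [← mul_smul, ← op_mul, tri_eq_uMat_mul_dMat, mul_assoc, dMat_mul_uMat, ← mul_assoc,
        ← uMat_add, op_mul, mul_smul] at h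
      rwa [show (α : ℂ) * (β * Complex.I) + (α : ℂ) ^ 2 * (σ * Complex.I) =
        ((σ + ((α ^ 2 - 1) * σ + α * β) : ℝ) : ℂ) * Complex.I by push_cast; ring] at h
  obtain ⟨z, hz⟩ := hY.nonempty
  exact eq_univ_of_op_smul_uMat_mul_I_mem μ hF hU hA hpq fun σ hσ => hI hσ z hz.1

end Nonperiodic

/-! ### Minimal sets containing a periodic point -/

theorem exists_Icc_subset_image_of_ne {f : ℝ → ℝ} {s : Set ℝ} (hs : IsPreconnected s)
    (hf : ContinuousOn f s) {x y : ℝ} (hx : x ∈ s) (hy : y ∈ s) (hne : f x ≠ f y) :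
    ∃ a b, a < b ∧ Set.Icc a b ⊆ f '' s :=
  hne.lt_or_gt.elim (fun h => ⟨_, _, h, hs.intermediate_value hx hy hf⟩)
    fun h => ⟨_, _, h, hs.intermediate_value hy hx hf⟩

theorem exists_Icc_subset_image_quadratic {p q : ℝ} (e : ℝ) (hpq : p ≠ 0 ∨ q ≠ 0) :
    ∃ a b, a < b ∧ Set.Icc a b ⊆ (fun θ => e + p * θ + q * θ ^ 2) '' Set.Ioc 0 1 := by
  let f : ℝ → ℝ := fun θ => e + p * θ + q * θ ^ 2
  have hf : ContinuousOn f (Set.Ioc 0 1) := by fun_prop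
  have hne : f (1 / 4) ≠ f (1 / 2) ∨ f (1 / 2) ≠ f 1 := by
    by_contra! h
    simp only [f] at h
    exact hpq.elim (· (by linarith)) (· (by linarith))
  exact hne.elim
    (exists_Icc_subset_image_of_ne isPreconnected_Ioc hf (by norm_num) (by norm_num))
    (exists_Icc_subset_image_of_ne isPreconnected_Ioc hf (by norm_num) (by norm_num))

section Periodic

variable {X : Type*} [MulAction SL2Cᵐᵒᵖ X]

theorem op_smul_uMat_comm (x : X) (ζ ζ' : ℂ) :
    x <• uMat ζ <• uMat ζ' = x <• uMat ζ' <• uMat ζ := by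
  simp only [← mul_smul, ← op_mul, ← uMat_add, add_comm]

theorem UInvariant.preimage_op_smul_uMat {F : Set X} (hU : UInvariant F) (ζ : ℂ) :
    UInvariant ((· <• uMat ζ) ⁻¹' F) := fun x hx t => by
  rw [Set.mem_preimage, op_smul_uMat_comm]
  exact hU _ hx t

theorem op_smul_uMat_nat_mul_eq_self {z : X} {τ : ℝ} (hz : z <• uMat τ = z) (n : ℕ) :
    z <• uMat ((n * τ : ℝ)) = z := by
  induction n with
  | zero => simp [uMat_zero]
  | succ n ih =>
    have : (((n + 1 : ℕ) * τ : ℝ) : ℂ) = ((n * τ : ℝ) : ℂ) + τ := by push_cast; ring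
    rw [this, uMat_add, op_mul, mul_smul, ih, hz]

theorem exists_op_smul_uMat_eq_self_tendsto_div {z : X} {τ : ℝ} (hτ : τ ≠ 0)
    (hz : z <• uMat τ = z) {R : ℕ → ℝ} (hR : Tendsto R atTop atTop) {θ : ℝ} (hθ : 0 < θ) :
    ∃ s : ℕ → ℝ, (∀ n, z <• uMat (s n) = z) ∧ Tendsto (fun n => s n / R n) atTop (𝓝 θ) := by
  wlog hτ_pos : 0 < τ generalizing τ
  · refine this (neg_ne_zero.2 hτ) ?_ (by linarith [lt_of_le_of_ne (not_lt.1 hτ_pos) hτ])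
    rw [Complex.ofReal_neg]
    nth_rw 1 [← hz]
    exact op_smul_uMat_op_smul_uMat_neg z τ
  refine ⟨fun n => ⌊θ / τ * R n⌋₊ * τ, fun n => op_smul_uMat_nat_mul_eq_self hz _, ?_⟩
  have h := ((tendsto_nat_floor_mul_div_atTop (R := ℝ) (by positivity : 0 ≤ θ / τ)).comp
    hR).mul_const τ
  rw [div_mul_cancel₀ _ hτ] at h
  exact h.congr fun n => div_mul_eq_mul_div _ _ _

theorem op_smul_op_smul_uMat_eq_self {z : X} {τ : ℝ} (hz : z <• uMat τ = z) {w : SL2C}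
    (hw : w 1 0 = 0) : z <• w <• uMat (τ * w 1 1 ^ 2) = z <• w := by
  have hdet : w 0 0 * w 1 1 = 1 := by simpa [hw] using SL2C_det w
  have : w * uMat (τ * w 1 1 ^ 2) = uMat τ * w := by
    apply SL2C_ext <;> simp [hw]
    linear_combination (τ : ℂ) * w 1 1 * hdet
  rw [← mul_smul, ← op_mul, this, op_mul, mul_smul, hz]

variable [TopologicalSpace X]

/-- The limits of sequences `y (φ n) <• uMat (s n)`, where `φ n → ∞` and the times `s n` are
arbitrary. -/
def uLimitSet (y : ℕ → X) : Set X :=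
  ⋂ m, closure (⋃ n ≥ m, Set.range fun t : ℝ => y n <• uMat t)

theorem isClosed_uLimitSet (y : ℕ → X) : IsClosed (uLimitSet y) :=
  isClosed_iInter fun _ => isClosed_closure

theorem uLimitSet_subset {F : Set X} (hF : IsClosed F) (hU : UInvariant F) {y : ℕ → X}
    (hy : ∀ n, y n ∈ F) : uLimitSet y ⊆ F := by
  refine (Set.iInter_subset _ 0).trans (closure_minimal ?_ hF)
  simp only [Set.iUnion_subset_iff, Set.range_subset_iff]
  exact fun n _ t => hU _ (hy n) t

theorem mem_uLimitSet_of_tendsto {y : ℕ → X} {φ : ℕ → ℕ} (hφ : Tendsto φ atTop atTop) {s : ℕ → ℝ}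
    {x : X} (h : Tendsto (fun n => y (φ n) <• uMat (s n)) atTop (𝓝 x)) : x ∈ uLimitSet y := by
  refine Set.mem_iInter.2 fun m => mem_closure_of_tendsto h ?_
  filter_upwards [hφ.eventually_ge_atTop m] with n hn
  exact Set.mem_iUnion₂.2 ⟨φ n, hn, s n, rfl⟩

variable [IsHomogeneousSL2Space X]

theorem uInvariant_uLimitSet (y : ℕ → X) : UInvariant (uLimitSet y) := by
  intro x hx t
  rw [uLimitSet, Set.mem_iInter] at hx ⊢
  refine fun m => map_mem_closure (continuous_const_smul (op (uMat t))) (hx m) fun x hx => ?_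
  obtain ⟨n, hn, t', rfl⟩ := Set.mem_iUnion₂.1 hx
  refine Set.mem_iUnion₂.2 ⟨n, hn, t' + t, ?_⟩
  simp only [Complex.ofReal_add, uMat_add, op_mul, mul_smul]

theorem exists_seq_of_mem_uLimitSet {y : ℕ → X} {z : X} (hz : z ∈ uLimitSet y) :
    ∃ (φ : ℕ → ℕ) (t : ℕ → ℝ) (w : ℕ → SL2C), Tendsto φ atTop atTop ∧ Tendsto w atTop (𝓝 1) ∧
      ∀ n, y (φ n) <• uMat (t n) = z <• w n := by
  obtain ⟨V, hV⟩ := (𝓝 (1 : SL2C)).exists_antitone_basis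
  have exists_near (k : ℕ) : ∃ n ≥ k, ∃ t : ℝ, ∃ w ∈ V k, y n <• uMat t = z <• w := by
    have hVz := (IsHomogeneousSL2Space.isOpenMap_orbit z).image_mem_nhds (hV.mem k)
    rw [op_one, one_smul] at hVz
    obtain ⟨x, ⟨w, hw, hwx⟩, hx⟩ := mem_closure_iff_nhds.1 (Set.mem_iInter.1 hz k) _ hVz
    obtain ⟨n, hn, t, ht⟩ := Set.mem_iUnion₂.1 hx
    exact ⟨n, hn, t, w, hw, ht.trans hwx.symm⟩
  choose φ hφ t w hw h using exists_near
  exact ⟨φ, t, w, tendsto_atTop_mono hφ tendsto_id, hV.tendsto hw, h⟩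

theorem op_smul_tri_mem_of_shearLimit {F : Set X} (hF : IsClosed F) (hU : UInvariant F) {z : X}
    {τ : ℝ} (hτ : τ ≠ 0) (hz : z <• uMat τ = z) {g : ℕ → SL2C} {R : ℕ → ℝ} {κ a b : ℝ}
    (h : ShearLimit g R κ a b) (hg : ∀ n, z <• g n ∈ F) {θ : ℝ} (hθ : 0 < θ)
    (hκ : 0 < 1 - θ * κ) :
    z <• tri (1 - θ * κ) hκ.ne'
      (((θ * a + θ ^ 2 * b) / (1 - θ * κ) : ℝ) * Complex.I) ∈ F := by
  obtain ⟨s, hs, hsR⟩ := exists_op_smul_uMat_eq_self_tendsto_div hτ hz h.tendsto_atTop hθ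
  obtain ⟨t, ht⟩ := (h.of_tendsto_div hθ hsR).exists_tendsto_conj hκ
  refine hF.mem_of_tendsto (tendsto_op_smul tendsto_const_nhds ht) (.of_forall fun n => ?_)
  have hs' : z <• (uMat (s n))⁻¹ = z := by
    nth_rw 1 [← hs n]
    rw [← uMat_neg, op_smul_uMat_op_smul_uMat_neg]
  rw [op_mul, op_mul, mul_smul, mul_smul, hs']
  exact hU _ (hg n) _

theorem op_smul_uMat_mem_of_shearLimit {F : Set X} (hF : IsClosed F) (hU : UInvariant F)
    (hA : AInvariant F) {z : X} {τ : ℝ} (hτ : τ ≠ 0) (hz : z <• uMat τ = z) {g : ℕ → SL2C}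
    {R : ℕ → ℝ} {κ a b : ℝ} (h : ShearLimit g R κ a b) {σ : ℝ}
    (hg : ∀ n, z <• g n <• uMat (σ * Complex.I) ∈ F) {θ : ℝ} (hθ : 0 < θ) (hκ : 0 < 1 - θ * κ) :
    z <• uMat ((σ + (a - 2 * σ * κ) * θ + (b + σ * κ ^ 2) * θ ^ 2 : ℝ) * Complex.I) ∈ F := by
  refine hA.mem_of_op_smul_mem hκ ?_
  have hmem := op_smul_tri_mem_of_shearLimit (F := (· <• uMat (σ * Complex.I)) ⁻¹' F)
    (hF.preimage (continuous_const_smul _)) (hU.preimage_op_smul_uMat _) hτ hz h hg hθ hκ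
  rw [Set.mem_preimage, tri_eq_uMat_mul_dMat, ← mul_smul, ← op_mul, mul_assoc, dMat_mul_uMat,
    ← mul_assoc, ← uMat_add, op_mul, mul_smul] at hmem
  have hσ : σ + (a - 2 * σ * κ) * θ + (b + σ * κ ^ 2) * θ ^ 2 =
      (1 - θ * κ) * ((θ * a + θ ^ 2 * b) / (1 - θ * κ)) + (1 - θ * κ) ^ 2 * σ := by
    rw [mul_div_cancel₀ _ hκ.ne']
    ring
  rwa [hσ, Complex.ofReal_add, Complex.ofReal_mul (1 - θ * κ), Complex.ofReal_mul (_ ^ 2),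
    Complex.ofReal_pow, add_mul, mul_assoc, mul_assoc]

theorem eventually_entry_ne_zero {x z : X} {τ : ℝ} (hτ : τ ≠ 0) (hz : z <• uMat τ = z) {δ : ℕ → ℝ}
    (hδ : ∀ n, 0 < δ n) (hδ₀ : Tendsto δ atTop (𝓝 0)) {t : ℕ → ℝ} {w : ℕ → SL2C}
    (hw : Tendsto w atTop (𝓝 1))
    (h : ∀ n, x <• dMat (δ n) (hδ n).ne' <• uMat (t n) = z <• w n) :
    ∀ᶠ n in atTop, w n 1 0 ≠ 0 := by
  obtain ⟨r, hr, hsize⟩ := exists_le_norm_mul_sq_of_op_smul_uMat_eq x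
  have hlim : Tendsto (fun n => ‖(τ : ℂ) * w n 1 1 ^ 2‖ * δ n ^ 2) atTop (𝓝 0) := by
    simpa using (((tendsto_SL2C.1 hw 1 1).pow 2).const_mul (τ : ℂ)).norm.mul (hδ₀.pow 2)
  filter_upwards [hlim.eventually_lt_const hr] with n hn hw₀
  have hw₁ : w n 1 1 ≠ 0 := fun h₁ => by simpa [hw₀, h₁] using SL2C_det (w n)
  have hfix := op_smul_op_smul_uMat_eq_self hz hw₀
  rw [← h, op_smul_uMat_comm, smul_left_cancel_iff] at hfix
  exact hn.not_ge (hsize _ (hδ n) _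
    (mul_ne_zero (Complex.ofReal_ne_zero.2 hτ) (pow_ne_zero 2 hw₁)) hfix)

variable [SecondCountableTopology X] [MeasurableSpace X] [BorelSpace X] (μ : Measure X)
  [IsFiniteMeasure μ] [SMulInvariantMeasure SL2Cᵐᵒᵖ X μ] [NeZero μ]

include μ in
theorem eq_univ_of_shearLimit {F : Set X} (hF : IsClosed F) (hU : UInvariant F)
    (hA : AInvariant F) {z : X} {τ : ℝ} (hτ : τ ≠ 0) (hz : z <• uMat τ = z) {g : ℕ → SL2C}
    {R : ℕ → ℝ} {κ a b : ℝ} (h : ShearLimit g R κ a b) (hκ : κ < 1) {σ : ℝ}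
    (hg : ∀ n, z <• g n <• uMat (σ * Complex.I) ∈ F)
    (hne : a - 2 * σ * κ ≠ 0 ∨ b + σ * κ ^ 2 ≠ 0) : F = Set.univ := by
  obtain ⟨p, q, hpq, hI⟩ := exists_Icc_subset_image_quadratic σ hne
  refine eq_univ_of_op_smul_uMat_mul_I_mem μ hF hU hA (z := z) hpq fun ρ hρ => ?_
  obtain ⟨θ, hθ, rfl⟩ := hI hρ
  exact op_smul_uMat_mem_of_shearLimit hF hU hA hτ hz h hg hθ.1 (by nlinarith [hθ.1, hθ.2])

include μ in
theorem eq_univ_of_mem_uLimitSet {F : Set X} (hF : IsClosed F) (hU : UInvariant F)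
    (hA : AInvariant F) {x : X} {δ : ℕ → ℝ} (hδ : ∀ n, 0 < δ n) (hδ₀ : Tendsto δ atTop (𝓝 0))
    (hx : ∀ n, x <• dMat (δ n) (hδ n).ne' ∈ F) {σ : ℝ} (hσ : σ ≠ 0)
    (hxσ : ∀ n, x <• dMat (δ n) (hδ n).ne' <• uMat (σ * Complex.I) ∈ F) {z : X}
    (hz : z ∈ uLimitSet fun n => x <• dMat (δ n) (hδ n).ne') {τ : ℝ} (hτ : τ ≠ 0)
    (hper : z <• uMat τ = z) : F = Set.univ := by
  obtain ⟨φ, t, w, hφ, hw, h⟩ := exists_seq_of_mem_uLimitSet hz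
  have hw₀ := eventually_entry_ne_zero hτ hper (fun n => hδ (φ n)) (hδ₀.comp hφ) hw h
  obtain ⟨N, hN⟩ := eventually_atTop.1 hw₀
  obtain ⟨ψ, R, κ, a, b, -, hlim, hne, hκ, -, -⟩ := exists_shearLimit
    (hw.comp (tendsto_add_atTop_nat N)) (fun n => .inl (hN _ (Nat.le_add_left N n)))
    (c := 1 / 2) (by norm_num)
  have hκ₁ : κ < 1 := by linarith [le_abs_self κ]
  by_cases hab : a ≠ 0 ∨ b ≠ 0
  · refine eq_univ_of_shearLimit μ hF hU hA hτ hper hlim hκ₁ (σ := 0) (fun n => ?_) (by simpa)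
    simp only [Complex.ofReal_zero, zero_mul, uMat_zero, op_one, one_smul, Function.comp_apply,
      ← h]
    exact hU _ (hx _) _
  · obtain ⟨rfl, rfl⟩ : a = 0 ∧ b = 0 := by simpa using hab
    refine eq_univ_of_shearLimit μ hF hU hA hτ hper hlim hκ₁ (σ := σ) (fun n => ?_)
      (.inr (by simpa [hσ] using hne))
    simp only [Function.comp_apply, ← h]
    rw [op_smul_uMat_comm]
    exact hU _ (hxσ _) _

include μ in
theorem eq_univ_of_op_smul_dMat_op_smul_uMat_mem {F : Set X} (hF : IsClosed F) (hU : UInvariant F)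
    (hA : AInvariant F) {x : X} (hx : x ∈ F) {δ : ℕ → ℝ} (hδ : ∀ n, 0 < δ n)
    (hδ₀ : Tendsto δ atTop (𝓝 0)) {σ : ℝ} (hσ : σ ≠ 0)
    (hxσ : ∀ n, x <• dMat (δ n) (hδ n).ne' <• uMat (σ * Complex.I) ∈ F) : F = Set.univ := by
  let E := uLimitSet fun n => x <• dMat (δ n) (hδ n).ne'
  have hxF (n : ℕ) : x <• dMat (δ n) (hδ n).ne' ∈ F := hA _ hx _ (hδ n)
  have hEσ : E ⊆ (· <• uMat (σ * Complex.I)) ⁻¹' F :=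
    uLimitSet_subset (hF.preimage (continuous_const_smul _)) (hU.preimage_op_smul_uMat _) hxσ
  obtain ⟨w, hwK, φ, hφ, s, hw⟩ := exists_seq_tendsto_op_smul_dMat_uMat μ x hδ hδ₀
  obtain ⟨Y, hYE, hY⟩ := exists_isThickMinimal_subset μ (isClosed_uLimitSet _)
    (uInvariant_uLimitSet _) ⟨w, mem_uLimitSet_of_tendsto
      (y := fun n => x <• dMat (δ n) (hδ n).ne') hφ.tendsto_atTop hw, hwK⟩
  obtain ⟨z, hzY, hzK⟩ := hY.nonempty
  by_cases hper : ∀ t : ℝ, t ≠ 0 → z <• uMat t ≠ z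
  · exact hY.eq_univ_of_op_smul_uMat_mem μ hF hU hA (hYE.trans (uLimitSet_subset hF hU hxF)) hzY
      hzK hper hσ fun y hy => hEσ (hYE hy)
  · push Not at hper
    obtain ⟨τ, hτ, hper⟩ := hper
    exact eq_univ_of_mem_uLimitSet μ hF hU hA hδ hδ₀ hxF hσ hxσ (hYE hzY) hτ hper

include μ in
theorem eq_univ_of_tendsto_op_smul_uMat_mul_I_mem {F : Set X} (hF : IsClosed F)
    (hU : UInvariant F) (hA : AInvariant F) {x : X} (hx : x ∈ F) {σ : ℕ → ℝ} (hσ : ∀ n, σ n ≠ 0)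
    (hσ₀ : Tendsto σ atTop (𝓝 0)) (hxσ : ∀ n, x <• uMat (σ n * Complex.I) ∈ F) :
    F = Set.univ := by
  have of_frequently (e : ℝ) (he : e ^ 2 = 1) (hfr : ∃ᶠ n in atTop, 0 < e * σ n) :
      F = Set.univ := by
    obtain ⟨φ, hφ, hpos⟩ := extraction_of_frequently_atTop hfr
    refine eq_univ_of_op_smul_dMat_op_smul_uMat_mem μ hF hU hA hx (σ := e)
      (fun n => Real.sqrt_pos.2 (hpos n)) ?_ (by rintro rfl; norm_num at he) fun n => ?_
    · simpa [Function.comp_def] using ((hσ₀.comp hφ.tendsto_atTop).const_mul e).sqrt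
    · have hsq : ((√(e * σ (φ n)) : ℝ) : ℂ) ^ 2 * (e * Complex.I) = σ (φ n) * Complex.I := by
        rw [← mul_assoc, ← Complex.ofReal_pow, Real.sq_sqrt (hpos n).le, ← Complex.ofReal_mul,
          show e * σ (φ n) * e = σ (φ n) by linear_combination σ (φ n) * he]
      rw [← mul_smul, ← op_mul, dMat_mul_uMat, hsq, op_mul, mul_smul]
      exact hA _ (hxσ _) _ (Real.sqrt_pos.2 (hpos n))
  have hsign (n : ℕ) : 0 < 1 * σ n ∨ 0 < -1 * σ n := by
    simpa using (hσ n).symm.lt_or_gt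
  exact (frequently_or_distrib.1 (Frequently.of_forall hsign)).elim
    (of_frequently 1 (by norm_num)) (of_frequently (-1) (by norm_num))

end Periodic

/-! ### Closures of `SL(2,ℝ)`-orbits -/

/-- `SL(2,ℝ)` as a subgroup of `SL(2,ℂ)`. -/
def realSubgroup : Subgroup SL2C := (Matrix.SpecialLinearGroup.map (algebraMap ℝ ℂ)).range

theorem mem_realSubgroup_of_im_eq_zero {g : SL2C} (h : ∀ i j, (g i j).im = 0) :
    g ∈ realSubgroup := by
  have hre (i j : Fin 2) : (((g i j).re : ℝ) : ℂ) = g i j := Complex.ext (by simp) (by simp [h])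
  refine ⟨⟨Matrix.of fun i j => (g i j).re, Complex.ofReal_injective ?_⟩, ?_⟩
  · simpa [Matrix.det_fin_two, hre] using SL2C_det g
  · exact SL2C_ext (hre 0 0) (hre 0 1) (hre 1 0) (hre 1 1)

theorem uMat_mem_realSubgroup (t : ℝ) : uMat t ∈ realSubgroup :=
  mem_realSubgroup_of_im_eq_zero fun i j => by fin_cases i <;> fin_cases j <;> simp

theorem lMat_mem_realSubgroup (t : ℝ) : lMat t ∈ realSubgroup :=
  mem_realSubgroup_of_im_eq_zero fun i j => by fin_cases i <;> fin_cases j <;> simp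

theorem tri_mem_realSubgroup {δ : ℝ} (hδ : δ ≠ 0) {z : ℂ} (hz : z.im = 0) :
    tri δ hδ z ∈ realSubgroup :=
  mem_realSubgroup_of_im_eq_zero fun i j => by
    fin_cases i <;> fin_cases j <;> simp [hz, ← Complex.ofReal_inv]

theorem ShearLimit.eq_zero_of_re_eq_zero {g : ℕ → SL2C} {s : ℕ → ℝ} {κ a b : ℝ}
    (h : ShearLimit g s κ a b) (hre : ∀ n, (g n 1 0).re = 0) : κ = 0 := by
  have := (Complex.continuous_re.tendsto _).comp h.tendsto_entry
  refine tendsto_nhds_unique this (tendsto_const_nhds.congr fun n => ?_)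
  simp [hre]

section Closure

variable {X : Type*} [MulAction SL2Cᵐᵒᵖ X]

theorem op_smul_uMat_mul_I_mem_of_op_smul_tri_mem {F : Set X} (hU : UInvariant F)
    (hA : AInvariant F) {x : X} {α : ℝ} (hα : 0 < α) {w : ℂ} (h : x <• tri α hα.ne' w ∈ F) :
    x <• uMat ((α * w.im : ℝ) * Complex.I) ∈ F := by
  have hmem := hU _ h (-(w.re / α))
  rw [← mul_smul, ← op_mul, tri_mul_uMat_neg_re_div, tri_eq_uMat_mul_dMat, op_mul, mul_smul,
    ← mul_assoc, ← Complex.ofReal_mul] at hmem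
  exact hA.mem_of_op_smul_mem hα hmem

/-- Invariance under `SL(2,ℝ)`, acting on the right. -/
def HInvariant (F : Set X) : Prop := ∀ x ∈ F, ∀ g ∈ realSubgroup, x <• g ∈ F

theorem HInvariant.uInvariant {F : Set X} (hF : HInvariant F) : UInvariant F :=
  fun x hx t => hF x hx _ (uMat_mem_realSubgroup t)

theorem HInvariant.aInvariant {F : Set X} (hF : HInvariant F) : AInvariant F :=
  fun x hx _ _ => hF x hx _ (tri_mem_realSubgroup _ rfl)

theorem HInvariant.op_smul_mem_iff {F : Set X} (hF : HInvariant F) {x : X} {g : SL2C}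
    (hg : g ∈ realSubgroup) : x <• g ∈ F ↔ x ∈ F :=
  ⟨fun h => by simpa [← mul_smul, ← op_mul] using hF _ h _ (inv_mem hg), fun h => hF x h g hg⟩

theorem HInvariant.sdiff {S T : Set X} (hS : HInvariant S) (hT : HInvariant T) :
    HInvariant (S \ T) :=
  fun x hx g hg => ⟨hS x hx.1 g hg, fun h => hx.2 ((hT.op_smul_mem_iff hg).1 h)⟩

/-- The orbit of `x` under `SL(2,ℝ)`. -/
def hOrbit (x : X) : Set X := {y | ∃ g ∈ realSubgroup, x <• g = y}

theorem hInvariant_hOrbit (x : X) : HInvariant (hOrbit x) := by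
  rintro _ ⟨k, hk, rfl⟩ g hg
  exact ⟨k * g, mul_mem hk hg, by rw [op_mul, mul_smul]⟩

/-- The set `F` accumulates at `x` in directions transverse to the `SL(2,ℝ)`-orbits. -/
def IsTransverseLimit (F : Set X) (x : X) : Prop :=
  ∃ g : ℕ → SL2C, Tendsto g atTop (𝓝 1) ∧ ∀ n, g n ∉ realSubgroup ∧ x <• g n ∈ F

theorem IsTransverseLimit.op_smul {F : Set X} (hF : HInvariant F) {x : X}
    (hx : IsTransverseLimit F x) {k : SL2C} (hk : k ∈ realSubgroup) :
    IsTransverseLimit F (x <• k) := by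
  obtain ⟨g, hg, hgF⟩ := hx
  refine ⟨fun n => k⁻¹ * g n * k, ?_, fun n => ⟨?_, ?_⟩⟩
  · simpa using (hg.const_mul k⁻¹).mul_const k
  · rw [mul_mem_cancel_right hk, mul_mem_cancel_left (inv_mem hk)]
    exact (hgF n).1
  · simpa [← mul_smul, ← op_mul, ← mul_assoc] using hF _ (hgF n).2 k hk

theorem IsTransverseLimit.exists_re_eq_zero {F : Set X} (hF : HInvariant F) {x : X}
    (hx : IsTransverseLimit F x) : ∃ g : ℕ → SL2C, Tendsto g atTop (𝓝 1) ∧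
      ∀ n, g n ∉ realSubgroup ∧ x <• g n ∈ F ∧ (g n 1 0).re = 0 ∧ 0 < (g n 0 0).re := by
  obtain ⟨w, hw, hwF⟩ := hx
  let t : ℕ → ℝ := fun n => -(w n 1 0).re / (w n 1 1).re
  have hre (i j : Fin 2) {w : ℕ → SL2C} (hw : Tendsto w atTop (𝓝 1)) :
      Tendsto (fun n => (w n i j).re) atTop (𝓝 ((1 : SL2C) i j).re) :=
    (Complex.continuous_re.tendsto _).comp (tendsto_SL2C.1 hw i j)
  have ht : Tendsto t atTop (𝓝 0) := by
    simpa using! (hre 1 0 hw).neg.div (hre 1 1 hw) (by simp)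
  have hwt : Tendsto (fun n => w n * lMat (t n)) atTop (𝓝 1) := by
    simpa [lMat_zero, Function.comp_def] using
      hw.mul ((continuous_lMat.tendsto _).comp ((Complex.continuous_ofReal.tendsto _).comp ht))
  obtain ⟨N, hN⟩ := eventually_atTop.1 (((hre 1 1 hw).eventually_ne (b₂ := 0) (by simp)).and
    ((hre 0 0 hwt).eventually_const_lt (u := 0) (by simp)))
  refine ⟨fun n => w (n + N) * lMat (t (n + N)), hwt.comp (tendsto_add_atTop_nat N), fun n =>
    ⟨?_, ?_, ?_, (hN _ (Nat.le_add_left N n)).2⟩⟩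
  · rw [mul_mem_cancel_right (lMat_mem_realSubgroup _)]
    exact (hwF _).1
  · rw [op_mul, mul_smul]
    exact hF _ (hwF _).2 _ (lMat_mem_realSubgroup _)
  · have := (hN _ (Nat.le_add_left N n)).1
    have entry_one_zero : ((w (n + N) * lMat (t (n + N))) 1 0).re =
        (w (n + N) 1 0).re + (w (n + N) 1 1).re * t (n + N) := by simp [-cons_mul]
    rw [entry_one_zero, mul_div_cancel₀ _ this, add_neg_cancel]

variable [TopologicalSpace X]

theorem HInvariant.closure [IsHomogeneousSL2Space X] {S : Set X} (hS : HInvariant S) :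
    HInvariant (closure S) :=
  fun _ hx g hg => map_mem_closure (continuous_const_smul (op g)) hx fun y hy => hS y hy g hg

theorem isTransverseLimit_of_mem_closure [IsHomogeneousSL2Space X] [FirstCountableTopology X]
    {S F : Set X} (hSF : S ⊆ F) {x : X} (hx : x ∈ closure S)
    (hxS : ∀ g ∈ realSubgroup, x <• g ∉ S) : IsTransverseLimit F x := by
  obtain ⟨f, hfS, hf⟩ := mem_closure_iff_seq_limit.1 hx
  obtain ⟨g, hg, hgf⟩ :=
    exists_seq_tendsto_one_op_smul_eq (IsHomogeneousSL2Space.isOpenMap_orbit x) hf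
  exact ⟨g, hg, fun n => ⟨fun hgn => hxS _ hgn (hgf n ▸ hfS n), hgf n ▸ hSF (hfS n)⟩⟩

variable [IsHomogeneousSL2Space X] [SecondCountableTopology X] [MeasurableSpace X] [BorelSpace X]
  (μ : Measure X) [IsFiniteMeasure μ] [SMulInvariantMeasure SL2Cᵐᵒᵖ X μ] [NeZero μ]

include μ in
theorem IsThickMinimal.eq_univ_of_tendsto_one {Y F : Set X} (hY : IsThickMinimal Y)
    (hF : IsClosed F) (hU : UInvariant F) (hA : AInvariant F) (hYF : Y ⊆ F) {y : X} (hy : y ∈ Y)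
    (hyK : y ∈ thickPart X (1 / 8)) {g : ℕ → SL2C} (hg : Tendsto g atTop (𝓝 1))
    (hne : ∀ n, g n 1 0 ≠ 0 ∨ shearLin (g n) ≠ 0) (hre : ∀ n, (g n 1 0).re = 0)
    (hgF : ∀ n, y <• g n ∈ F) : F = Set.univ := by
  by_cases hper : ∀ t : ℝ, t ≠ 0 → y <• uMat t ≠ y
  · obtain ⟨L, -, hreturn⟩ := exists_op_smul_uMat_mem_thickPart_of_mem hyK
    obtain ⟨φ, s, κ, a, b, -, hs, h, hne, -, -⟩ := exists_shearLimit_mem hg hne hreturn one_pos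
    obtain rfl := h.eq_zero_of_re_eq_zero fun n => hre _
    refine hY.eq_univ_of_op_smul_uMat_mem μ hF hU hA hYF hy hyK hper
      (hne.resolve_left (· rfl)) fun x hx => hA.mem_of_op_smul_mem (δ := 1) one_pos ?_
    have := hY.op_smul_tri_mem_of_shearLimit μ hF hU hy hs h (fun n => hgF _) (by norm_num) hx
    simpa [tri_eq_uMat_mul_dMat, op_mul, mul_smul] using this
  · push Not at hper
    obtain ⟨τ, hτ, hper⟩ := hper
    obtain ⟨φ, R, κ, a, b, -, h, hne, -, -, -⟩ := exists_shearLimit hg hne one_pos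
    obtain rfl := h.eq_zero_of_re_eq_zero fun n => hre _
    exact eq_univ_of_shearLimit μ hF hU hA hτ hper h one_pos (σ := 0)
      (fun n => by simpa [uMat_zero] using hgF _) (by simpa using hne)

include μ in
theorem eq_univ_of_tendsto_one_of_shearLin_eq_zero {F : Set X} (hF : IsClosed F)
    (hU : UInvariant F) (hA : AInvariant F) {x : X} (hx : x ∈ F) {g : ℕ → SL2C}
    (hg : Tendsto g atTop (𝓝 1)) (hgF : ∀ n, g n ∉ realSubgroup ∧ x <• g n ∈ F)
    (h₁₀ : ∀ n, g n 1 0 = 0) (hlin : ∀ n, shearLin (g n) = 0) (hre : ∀ n, 0 < (g n 0 0).re) :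
    F = Set.univ := by
  have htri (n : ℕ) := eq_tri_of_shearLin_eq_zero (h₁₀ n) (hlin n) (hre n)
  refine eq_univ_of_tendsto_op_smul_uMat_mul_I_mem μ hF hU hA hx
    (σ := fun n => (g n 0 0).re * (g n 0 1).im) (fun n => mul_ne_zero (hre n).ne' fun him => ?_)
    ?_ fun n => ?_
  · exact (hgF n).1 (htri n ▸ tri_mem_realSubgroup _ him)
  · simpa using ((Complex.continuous_re.tendsto _).comp (tendsto_SL2C.1 hg 0 0)).mul
      ((Complex.continuous_im.tendsto _).comp (tendsto_SL2C.1 hg 0 1))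
  · exact op_smul_uMat_mul_I_mem_of_op_smul_tri_mem hU hA (hre n) (htri n ▸ (hgF n).2)

include μ in
theorem HInvariant.eq_univ_of_isTransverseLimit {F F' : Set X} (hF : IsClosed F)
    (hFH : HInvariant F) (hF' : IsClosed F') (hFH' : HInvariant F') (hne : F'.Nonempty)
    (hsub : F' ⊆ F) (hlim : ∀ y ∈ F', IsTransverseLimit F y) : F = Set.univ := by
  obtain ⟨Y, hYF', hY⟩ := exists_isThickMinimal_subset μ hF' hFH'.uInvariant
    (hFH'.uInvariant.exists_mem_thickPart hFH'.aInvariant hne)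
  obtain ⟨y, hy, hyK⟩ := hY.nonempty
  obtain ⟨g, hg, hgF⟩ := (hlim y (hYF' hy)).exists_re_eq_zero hFH
  by_cases hfreq : ∃ᶠ n in atTop, g n 1 0 ≠ 0 ∨ shearLin (g n) ≠ 0
  · obtain ⟨φ, hφ, hne⟩ := extraction_of_frequently_atTop hfreq
    exact hY.eq_univ_of_tendsto_one μ hF hFH.uInvariant hFH.aInvariant (hYF'.trans hsub) hy hyK
      (hg.comp hφ.tendsto_atTop) hne (fun n => (hgF _).2.2.1) fun n => (hgF _).2.1
  · obtain ⟨N, hN⟩ := eventually_atTop.1 (not_frequently.1 hfreq)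
    have h₀ (n : ℕ) : g (n + N) 1 0 = 0 ∧ shearLin (g (n + N)) = 0 := by
      simpa using hN _ (Nat.le_add_left N n)
    exact eq_univ_of_tendsto_one_of_shearLin_eq_zero μ hF hFH.uInvariant hFH.aInvariant
      (hsub (hYF' hy)) (hg.comp (tendsto_add_atTop_nat N)) (fun n => ⟨(hgF _).1, (hgF _).2.1⟩)
      (fun n => (h₀ n).1) (fun n => (h₀ n).2) fun n => (hgF _).2.2.2

include μ in
theorem closure_hOrbit_eq_or_eq_univ (x : X) :
    closure (hOrbit x) = hOrbit x ∨ closure (hOrbit x) = Set.univ := by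
  have hO := hInvariant_hOrbit x
  have hlim : ∀ y ∈ closure (hOrbit x) \ hOrbit x, IsTransverseLimit (closure (hOrbit x)) y :=
    fun y hy => isTransverseLimit_of_mem_closure subset_closure hy.1 fun g hg h =>
      hy.2 ((hO.op_smul_mem_iff hg).1 h)
  rcases (closure (hOrbit x) \ hOrbit x).eq_empty_or_nonempty with hemp | hne
  · exact .inl ((Set.sdiff_eq_empty.1 hemp).antisymm subset_closure)
  refine .inr ?_
  by_cases hcl : IsClosed (closure (hOrbit x) \ hOrbit x)
  · exact HInvariant.eq_univ_of_isTransverseLimit μ isClosed_closure hO.closure hcl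
      (hO.closure.sdiff hO) hne Set.sdiff_subset hlim
  obtain ⟨z, hz, hzn⟩ : ∃ z ∈ closure (closure (hOrbit x) \ hOrbit x), z ∈ hOrbit x := by
    by_contra! hcon
    refine hcl (isClosed_of_closure_subset fun z hz => ⟨?_, hcon z hz⟩)
    exact closure_minimal Set.sdiff_subset isClosed_closure hz
  obtain ⟨k, hk, rfl⟩ := hzn
  have hzlim : IsTransverseLimit (closure (hOrbit x)) (x <• k) :=
    isTransverseLimit_of_mem_closure Set.sdiff_subset hz fun g hg h =>
      h.2 (hO _ ⟨k, hk, rfl⟩ g hg)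
  refine HInvariant.eq_univ_of_isTransverseLimit μ isClosed_closure hO.closure isClosed_closure
    hO.closure (hne.mono Set.sdiff_subset) subset_rfl fun y hy => ?_
  by_cases hyO : y ∈ hOrbit x
  · obtain ⟨l, hl, rfl⟩ := hyO
    simpa [← mul_smul, ← op_mul] using
      hzlim.op_smul hO.closure (mul_mem (inv_mem hk) hl)
  · exact hlim y ⟨hy, hyO⟩

end Closure

/-! ### The homogeneous space `Γ\G` -/

theorem isOpenQuotientMap_pr : IsOpenQuotientMap pr := QuotientGroup.isOpenQuotientMap_mk

theorem pr_eq_one_iff {g : SL2C} : pr g = 1 ↔ g = 1 ∨ g = -1 := by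
  refine (QuotientGroup.eq_one_iff g).trans (Matrix.SpecialLinearGroup.mem_center_iff.trans
    ⟨?_, ?_⟩)
  · rintro ⟨r, hr, hg⟩
    rw [Fintype.card_fin, sq_eq_one_iff] at hr
    rcases hr with rfl | rfl
    · exact .inl (Subtype.ext (by simp [← hg]))
    · exact .inr (Subtype.ext (by rw [← hg, map_neg, map_one]; rfl))
  · rintro (rfl | rfl)
    · exact ⟨1, by simp⟩
    · exact ⟨-1, by simp, by ext i j; fin_cases i <;> fin_cases j <;> simp⟩

theorem pr_neg (g : SL2C) : pr (-g) = pr g := by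
  rw [← neg_one_mul, map_mul, pr_eq_one_iff.2 (.inr rfl), one_mul]

theorem isOpenQuotientMap_mkX : IsOpenQuotientMap (mkX Γ) :=
  MulAction.isOpenQuotientMap_quotientMk

instance : SecondCountableTopology PSL2C :=
  isOpenQuotientMap_pr.isQuotientMap.secondCountableTopology isOpenQuotientMap_pr.isOpenMap

instance : SecondCountableTopology (XΓ Γ) :=
  (isOpenQuotientMap_mkX Γ).isQuotientMap.secondCountableTopology
    (isOpenQuotientMap_mkX Γ).isOpenMap

instance : MulAction SL2Cᵐᵒᵖ (XΓ Γ) where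
  smul g x := act Γ x (pr g.unop)
  one_smul x := by
    obtain ⟨k, rfl⟩ := (isOpenQuotientMap_mkX Γ).surjective x
    exact congrArg (mkX Γ) (by simp)
  mul_smul g h x := by
    obtain ⟨k, rfl⟩ := (isOpenQuotientMap_mkX Γ).surjective x
    exact congrArg (mkX Γ) (by simp [mul_assoc])

theorem mkX_op_smul (k : PSL2C) (g : SL2C) : mkX Γ k <• g = mkX Γ (k * pr g) := rfl

theorem mkX_eq_mkX_iff {g h : PSL2C} : mkX Γ g = mkX Γ h ↔ h * g⁻¹ ∈ Γ := by
  rw [← QuotientGroup.rightRel_apply]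
  exact Quotient.eq''

instance : ContinuousSMul SL2Cᵐᵒᵖ (XΓ Γ) where
  continuous_smul := by
    rw [← (IsOpenQuotientMap.id.prodMap (isOpenQuotientMap_mkX Γ)).continuous_comp_iff]
    exact (isOpenQuotientMap_mkX Γ).continuous.comp (continuous_snd.mul
      (isOpenQuotientMap_pr.continuous.comp (continuous_unop.comp continuous_fst)))

instance : IsPretransitive SL2Cᵐᵒᵖ (XΓ Γ) where
  exists_smul_eq x y := by
    obtain ⟨k, rfl⟩ := (isOpenQuotientMap_mkX Γ).surjective x
    obtain ⟨l, rfl⟩ := (isOpenQuotientMap_mkX Γ).surjective y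
    obtain ⟨g, hg⟩ := isOpenQuotientMap_pr.surjective (k⁻¹ * l)
    exact ⟨op g, by rw [mkX_op_smul, hg, mul_inv_cancel_left]⟩

theorem eventually_mem_imp_eq_one {G : Type*} [Group G] [TopologicalSpace G] (S : Subgroup G)
    [DiscreteTopology S] : ∀ᶠ g : G in 𝓝 1, g ∈ S → g = 1 := by
  refine eventually_nhdsWithin_iff (s := (S : Set G)).1
    ((eventually_nhds_subtype_iff (S : Set G) (1 : S) (· = 1)).1 ?_)
  rw [nhds_discrete]
  exact eventually_pure.2 rfl

theorem eventually_op_smul_eq_imp_eq_one [DiscreteTopology Γ] (x : XΓ Γ) :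
    ∀ᶠ g : SL2C in 𝓝 1, x <• g = x → g = 1 := by
  obtain ⟨k, rfl⟩ := (isOpenQuotientMap_mkX Γ).surjective x
  have hconj : Tendsto (fun g => k * pr g * k⁻¹) (𝓝 1) (𝓝 1) := by
    simpa using ((isOpenQuotientMap_pr.continuous.tendsto 1).const_mul k).mul_const k⁻¹
  filter_upwards [hconj.eventually (eventually_mem_imp_eq_one Γ),
    SL2C_ne_neg_one] with g hg hg' h
  have := hg ((mkX_eq_mkX_iff Γ).1 h.symm)
  rw [mul_inv_eq_one, mul_eq_left] at this
  exact (pr_eq_one_iff.1 this).resolve_right hg'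

instance [DiscreteTopology Γ] : IsHomogeneousSL2Space (XΓ Γ) where
  smul_neg x g := congrArg (act Γ x) (pr_neg g)
  isOpenMap_orbit x := by
    obtain ⟨k, rfl⟩ := (isOpenQuotientMap_mkX Γ).surjective x
    exact (isOpenQuotientMap_mkX Γ).isOpenMap.comp
      ((isOpenMap_mul_left k).comp isOpenQuotientMap_pr.isOpenMap)
  eventually_eq_one := eventually_op_smul_eq_imp_eq_one Γ

theorem orb_Hset (x : XΓ Γ) : orb Γ x Hset = hOrbit x := by
  ext y
  constructor
  · rintro ⟨_, ⟨g, rfl⟩, rfl⟩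
    exact ⟨_, ⟨g, rfl⟩, rfl⟩
  · rintro ⟨_, ⟨g, rfl⟩, rfl⟩
    exact ⟨_, ⟨g, rfl⟩, rfl⟩

theorem smulInvariantMeasure_of_map_act_eq [MeasurableSpace (XΓ Γ)] [BorelSpace (XΓ Γ)]
    {μ : Measure (XΓ Γ)} (hμ : ∀ g : PSL2C, Measure.map (fun x => act Γ x g) μ = μ) :
    SMulInvariantMeasure SL2Cᵐᵒᵖ (XΓ Γ) μ where
  measure_preimage_smul g s hs :=
    (Measure.map_apply (continuous_const_smul g).measurable hs).symm.trans
      (congrArg (· s) (hμ (pr g.unop)))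

/-- If `Γ` is a lattice in `PSL(2,ℂ)`, then for every `x ∈ Γ\G` the closure of
the orbit `xH` is either `xH` itself or all of `Γ\G`. -/
theorem closure_H_orbit_lattice
    (Γ : Subgroup PSL2C) (hdisc : DiscreteTopology Γ) (hlat : IsLattice Γ)
    (x : XΓ Γ) :
    closure (orb Γ x Hset) = orb Γ x Hset ∨ closure (orb Γ x Hset) = Set.univ := by
  let _ : MeasurableSpace (XΓ Γ) := borel _
  have _ : BorelSpace (XΓ Γ) := ⟨rfl⟩
  obtain ⟨μ, hμ₀, _, hμ⟩ := hlat
  have _ : NeZero μ := ⟨hμ₀⟩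
  have _ : SMulInvariantMeasure SL2Cᵐᵒᵖ (XΓ Γ) μ := smulInvariantMeasure_of_map_act_eq Γ hμ
  rw [orb_Hset]
  exact closure_hOrbit_eq_or_eq_univ μ x

end
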